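/- There is a constant C > 0 such that for every f ∈ ℓ²(ℤ), ‖ sup_{n ∈ ℕ} |ℳ_{2^n} f| ‖_{ℓ²(ℤ)} ≤ C ‖f‖_{ℓ²(ℤ)}. -/

import Mathlib

open scoped BigOperators

/-- The set of primes `p ≤ N`. -/
def primesUpTo (N : ℕ) : Finset ℕ := (Finset.range (N + 1)).filter Nat.Prime

/-- `ϑ(N) = Σ_{p ∈ ℙ_N} log p`. -/
noncomputable def theta (N : ℕ) : ℝ := ∑ p ∈ primesUpTo N, Real.log p

/-- The weighted average `ℳ_N f(x) = (1/ϑ(N)) Σ_{p ∈ ℙ_N} f(x + p) log p`. -/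
noncomputable def weightedPrimeAvg (f : ℤ → ℂ) (N : ℕ) (x : ℤ) : ℂ :=
  ((theta N : ℂ))⁻¹ * ∑ p ∈ primesUpTo N, f (x + p) * (Real.log p : ℂ)

/-! ### Hardy and Littlewood -/

/-- Kernel with quadratic decay. -/
noncomputable def hlK (N : ℕ) (n : ℤ) : ℝ :=
  (N : ℝ) / ((N + |(n : ℝ)|) * (N + |(n : ℝ)| + 1))

lemma hlK_nonneg (N : ℕ) (n : ℤ) : 0 ≤ hlK N n := by
  unfold hlK; positivity

lemma hlK_neg (N : ℕ) (n : ℤ) : hlK N (-n) = hlK N n := by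
  unfold hlK; simp

lemma hlK_pos {N : ℕ} (hN : 1 ≤ N) (n : ℤ) : 0 < hlK N n := by
  unfold hlK
  have : (0:ℝ) < N := by exact_mod_cast hN
  positivity

lemma hlK_sum_range {N : ℕ} (hN : 1 ≤ N) (B : ℕ) :
    ∑ m ∈ Finset.range B, hlK N (m : ℤ) ≤ 1 := by
  have hN' : (0:ℝ) < N := by exact_mod_cast hN
  have key : ∑ m ∈ Finset.range B, hlK N (m : ℤ) = N * (1 / N - 1 / (N + B)) := by
    induction B with
    | zero => simp
    | succ B ih =>
      rw [Finset.sum_range_succ, ih]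
      unfold hlK
      push_cast
      rw [abs_of_nonneg (by positivity : (0:ℝ) ≤ (B:ℝ))]
      field_simp
      ring
  rw [key, mul_sub, mul_one_div_cancel hN'.ne']
  have : 0 ≤ (N:ℝ) * (1 / (N + B)) := by positivity
  linarith

lemma hlK_sum {N : ℕ} (hN : 1 ≤ N) (X : Finset ℤ) :
    ∑ x ∈ X, hlK N x ≤ 2 := by
  classical
  obtain ⟨B, hB⟩ : ∃ B : ℕ, ∀ x ∈ X, x.natAbs < B := by
    refine ⟨X.sup Int.natAbs + 1, fun x hx => Nat.lt_succ_of_le (Finset.le_sup (f := Int.natAbs) hx)⟩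
  have hsub : X ⊆ (Finset.range B).image (fun m : ℕ => (m : ℤ)) ∪
      (Finset.range B).image (fun m : ℕ => -(m : ℤ)) := by
    intro x hx
    have := hB x hx
    simp only [Finset.mem_union, Finset.mem_image, Finset.mem_range]
    rcases le_total 0 x with h | h
    · left; exact ⟨x.natAbs, this, by omega⟩
    · right; exact ⟨x.natAbs, this, by omega⟩
  calc ∑ x ∈ X, hlK N x ≤ ∑ x ∈ (Finset.range B).image (fun m : ℕ => (m : ℤ)) ∪
      (Finset.range B).image (fun m : ℕ => -(m : ℤ)), hlK N x :=
        Finset.sum_le_sum_of_subset_of_nonneg hsub (fun _ _ _ => hlK_nonneg _ _)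
    _ ≤ ∑ x ∈ (Finset.range B).image (fun m : ℕ => (m : ℤ)), hlK N x +
        ∑ x ∈ (Finset.range B).image (fun m : ℕ => -(m : ℤ)), hlK N x := by
        rw [← Finset.sum_union_inter]
        have := Finset.sum_nonneg (s := (Finset.range B).image (fun m : ℕ => (m : ℤ)) ∩
          (Finset.range B).image (fun m : ℕ => -(m : ℤ))) (f := fun x => hlK N x)
          (fun _ _ => hlK_nonneg _ _)
        linarith
    _ ≤ 1 + 1 := by
        rw [Finset.sum_image (by intro a _ b _ h; simpa using h),
          Finset.sum_image (by intro a _ b _ h; simpa using h)]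
        simp only [hlK_neg]
        exact add_le_add (hlK_sum_range hN B) (hlK_sum_range hN B)
    _ = 2 := by norm_num

lemma hlK_pointwise {N M : ℕ} (hM : 1 ≤ M) (hMN : M ≤ N) (a b : ℤ) :
    hlK N a * hlK M b ≤ 4 * hlK N (a - b) * (hlK N a + hlK M b) := by
  have hN : 1 ≤ N := le_trans hM hMN
  have h1 := hlK_pos hN a
  have h2 := hlK_pos hM b
  have h3 := hlK_pos hN (a - b)
  have hM' : (1:ℝ) ≤ M := by exact_mod_cast hM
  have hN' : (1:ℝ) ≤ N := by exact_mod_cast hN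
  have hMN' : (M:ℝ) ≤ N := by exact_mod_cast hMN
  have key : (hlK N (a - b))⁻¹ ≤ 4 * ((hlK M b)⁻¹ + (hlK N a)⁻¹) := by
    unfold hlK
    rw [inv_div, inv_div, inv_div]
    have habs : |((a - b : ℤ) : ℝ)| ≤ |(a:ℝ)| + |(b:ℝ)| := by
      push_cast; exact abs_sub _ _
    set n := |((a - b : ℤ) : ℝ)| with hn
    set u := |(a:ℝ)|
    set v := |(b:ℝ)|
    have hn0 : 0 ≤ n := abs_nonneg _
    have hu0 : 0 ≤ u := abs_nonneg _
    have hv0 : 0 ≤ v := abs_nonneg _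
    have e1 : v ^ 2 / N ≤ (M + v) * (M + v + 1) / M := by
      rw [div_le_div_iff₀ (by linarith) (by linarith)]
      nlinarith [mul_nonneg hv0 hv0, mul_nonneg hv0 (by linarith : (0:ℝ) ≤ N), mul_nonneg (mul_nonneg hv0 hv0) (sub_nonneg.2 hMN'), mul_nonneg (by linarith : (0:ℝ) ≤ M) (by linarith : (0:ℝ) ≤ N), mul_nonneg (mul_nonneg (by linarith : (0:ℝ) ≤ M) (by linarith : (0:ℝ) ≤ N)) hv0, mul_nonneg (mul_nonneg (by linarith : (0:ℝ) ≤ M) (by linarith : (0:ℝ) ≤ N)) (by linarith : (0:ℝ) ≤ M)]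
    have e2 : (N + n) * (N + n + 1) / N ≤ 4 * (v ^ 2 / N + (N + u) * (N + u + 1) / N) := by
      rw [← add_div, ← mul_div_assoc]
      apply div_le_div_of_nonneg_right _ (by linarith)
      have : (N + n) ≤ N + u + v := by linarith
      have h5 : (N + n) * (N + n + 1) ≤ 2 * (N + n) ^ 2 := by nlinarith
      have h6 : (N + n) ^ 2 ≤ (N + u + v) ^ 2 := by
        apply pow_le_pow_left₀ (by linarith) this
      nlinarith [sq_nonneg (N + u - v)]
    linarith
  have h4 : hlK N a * hlK M b * hlK N (a-b) * (hlK N (a - b))⁻¹ ≤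
      hlK N a * hlK M b * hlK N (a-b) * (4 * ((hlK M b)⁻¹ + (hlK N a)⁻¹)) :=
    mul_le_mul_of_nonneg_left key (by positivity)
  rw [mul_assoc, mul_inv_cancel₀ h3.ne', mul_one] at h4
  calc _ ≤ _ := h4
    _ = _ := by field_simp

lemma hlK_conv {N M : ℕ} (hM : 1 ≤ M) (hMN : M ≤ N) (X : Finset ℤ) (x y : ℤ) :
    ∑ z ∈ X, hlK N (x - z) * hlK M (y - z) ≤ 16 * hlK N (x - y) := by
  have hN : 1 ≤ N := le_trans hM hMN
  have hshift : ∀ (L : ℕ) (_ : 1 ≤ L) (w : ℤ), ∑ z ∈ X, hlK L (w - z) ≤ 2 := by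
    intro L hL w
    have := hlK_sum hL (X.image (fun z => w - z))
    rwa [Finset.sum_image (by intro a _ b _ h; simpa using h)] at this
  calc ∑ z ∈ X, hlK N (x - z) * hlK M (y - z)
      ≤ ∑ z ∈ X, 4 * hlK N (x - y) * (hlK N (x - z) + hlK M (y - z)) := by
        apply Finset.sum_le_sum
        intro z _
        have := hlK_pointwise hM hMN (x - z) (y - z)
        rwa [show x - z - (y - z) = x - y by ring] at this
    _ = 4 * hlK N (x - y) * (∑ z ∈ X, hlK N (x - z) + ∑ z ∈ X, hlK M (y - z)) := by
        rw [← Finset.mul_sum, Finset.sum_add_distrib]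
    _ ≤ 4 * hlK N (x - y) * (2 + 2) := by
        apply mul_le_mul_of_nonneg_left (add_le_add (hshift N hN x) (hshift M hM y))
        have := hlK_nonneg N (x - y)
        positivity
    _ = _ := by ring

lemma hl_conv_max (N M : ℕ) (hN : 1 ≤ N) (hM : 1 ≤ M) (X : Finset ℤ) (x y : ℤ) :
    ∑ z ∈ X, hlK N (x - z) * hlK M (y - z) ≤ 16 * (hlK N (x - y) + hlK M (y - x)) := by
  rcases le_total M N with h | h
  · have := hlK_conv hM h X x y
    have := hlK_nonneg M (y - x)
    linarith
  · have h1 := hlK_conv hN h X y x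
    have := hlK_nonneg N (x - y)
    simp_rw [mul_comm (hlK N _)]
    linarith

lemma hl_dual (X : Finset ℤ) (N : ℤ → ℕ) (hN : ∀ x, 1 ≤ N x) (h : ℤ → ℝ) (hh : ∀ x, 0 ≤ h x) :
    ∑ z ∈ X, (∑ x ∈ X, hlK (N x) (x - z) * h x) ^ 2 ≤ 32 ^ 2 * ∑ x ∈ X, h x ^ 2 := by
  set g : ℤ → ℝ := fun z => ∑ x ∈ X, hlK (N x) (x - z) * h x with hg
  set S := ∑ z ∈ X, g z ^ 2 with hS
  have h1 : S ≤ 32 * ∑ z ∈ X, h z * g z := by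
    calc S = ∑ z ∈ X, ∑ x ∈ X, ∑ y ∈ X, h x * h y * (hlK (N x) (x - z) * hlK (N y) (y - z)) := by
          apply Finset.sum_congr rfl
          intro z _
          rw [pow_two, hg, Finset.sum_mul_sum]
          apply Finset.sum_congr rfl; intro x _
          apply Finset.sum_congr rfl; intro y _
          ring
      _ = ∑ x ∈ X, ∑ y ∈ X, h x * h y * ∑ z ∈ X, (hlK (N x) (x - z) * hlK (N y) (y - z)) := by
          rw [Finset.sum_comm]
          apply Finset.sum_congr rfl; intro x _
          rw [Finset.sum_comm]
          apply Finset.sum_congr rfl; intro y _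
          rw [Finset.mul_sum]
      _ ≤ ∑ x ∈ X, ∑ y ∈ X, h x * h y * (16 * (hlK (N x) (x - y) + hlK (N y) (y - x))) := by
          apply Finset.sum_le_sum; intro x _
          apply Finset.sum_le_sum; intro y _
          exact mul_le_mul_of_nonneg_left (hl_conv_max _ _ (hN x) (hN y) X x y)
            (mul_nonneg (hh x) (hh y))
      _ = ∑ x ∈ X, ∑ y ∈ X, 16 * (h y * (hlK (N x) (x - y) * h x)) +
          ∑ x ∈ X, ∑ y ∈ X, 16 * (h x * (hlK (N y) (y - x) * h y)) := by
          rw [← Finset.sum_add_distrib]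
          apply Finset.sum_congr rfl; intro x _
          rw [← Finset.sum_add_distrib]
          apply Finset.sum_congr rfl; intro y _
          ring
      _ = 32 * ∑ z ∈ X, h z * g z := by
          rw [Finset.sum_comm]
          simp_rw [← Finset.mul_sum]
          simp only [hg]
          ring
  have h2 : ∑ z ∈ X, h z * g z ≤ ∑ z ∈ X, (16 * h z ^ 2 + g z ^ 2 / 64) := by
    apply Finset.sum_le_sum; intro z _
    nlinarith [sq_nonneg (4 * h z - g z / 8)]
  rw [Finset.sum_add_distrib, ← Finset.mul_sum, ← Finset.sum_div, ← hS] at h2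
  linarith

lemma hl_primal (X : Finset ℤ) (N : ℤ → ℕ) (hN : ∀ x, 1 ≤ N x) (f : ℤ → ℝ) (hf : ∀ x, 0 ≤ f x) :
    ∑ x ∈ X, (∑ z ∈ X, hlK (N x) (x - z) * f z) ^ 2 ≤ 32 ^ 2 * ∑ x ∈ X, f x ^ 2 := by
  set g : ℤ → ℝ := fun x => ∑ z ∈ X, hlK (N x) (x - z) * f z with hg
  have hg0 : ∀ x, 0 ≤ g x := fun x => Finset.sum_nonneg fun z _ => mul_nonneg (hlK_nonneg _ _) (hf z)
  have hd := hl_dual X N hN g hg0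
  set S := ∑ x ∈ X, g x ^ 2 with hS
  have h1 : S = ∑ z ∈ X, f z * (∑ x ∈ X, hlK (N x) (x - z) * g x) := by
    calc S = ∑ x ∈ X, ∑ z ∈ X, g x * (hlK (N x) (x - z) * f z) := by
          apply Finset.sum_congr rfl; intro x _
          rw [pow_two]; nth_rewrite 2 [hg]; rw [Finset.mul_sum]
      _ = _ := by
          rw [Finset.sum_comm]
          apply Finset.sum_congr rfl; intro z _
          rw [Finset.mul_sum]
          apply Finset.sum_congr rfl; intro x _
          ring
  have h2 : S ≤ ∑ z ∈ X, (32 ^ 2 / 2 * f z ^ 2 +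
      (∑ x ∈ X, hlK (N x) (x - z) * g x) ^ 2 / (2 * 32 ^ 2)) := by
    rw [h1]
    apply Finset.sum_le_sum; intro z _
    nlinarith [sq_nonneg (32 * f z - (∑ x ∈ X, hlK (N x) (x - z) * g x) / 32)]
  rw [Finset.sum_add_distrib, ← Finset.mul_sum, ← Finset.sum_div] at h2
  linarith

/-- Box averages. -/
noncomputable def boxAvg (I M : ℕ) (G : ℤ → ℝ) (x : ℤ) : ℝ :=
  (1 / (I : ℝ)) * ∑ n ∈ Finset.Ioo (-(I : ℤ)) I, G (x + M * n)

lemma boxAvg_nonneg (I M : ℕ) (G : ℤ → ℝ) (hG : ∀ x, 0 ≤ G x) (x : ℤ) : 0 ≤ boxAvg I M G x :=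
  mul_nonneg (by positivity) (Finset.sum_nonneg fun _ _ => hG _)

lemma hlK_box {I : ℕ} (hI : 1 ≤ I) {n : ℤ} (hn : n ∈ Finset.Ioo (-(I : ℤ)) I) :
    1 / (I : ℝ) ≤ 4 * hlK I n := by
  have hI' : (1:ℝ) ≤ I := by exact_mod_cast hI
  rw [Finset.mem_Ioo] at hn
  have h1 : |n| + 1 ≤ I := by
    have := abs_lt.2 hn; omega
  have h2 : |(n:ℝ)| + 1 ≤ I := by exact_mod_cast h1
  unfold hlK
  have h0 : 0 ≤ |(n:ℝ)| := abs_nonneg _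
  set u := |(n:ℝ)|
  rw [← mul_div_assoc, div_le_div_iff₀ (by linarith) (by positivity)]
  nlinarith

lemma boxAvg_one_finite (X : Finset ℤ) (N : ℤ → ℕ) (hN : ∀ x, 1 ≤ N x) (G : ℤ → ℝ)
    (hG : ∀ x, 0 ≤ G x) :
    ∃ Y : Finset ℤ, ∑ x ∈ X, (boxAvg (N x) 1 G x) ^ 2 ≤ 128 ^ 2 * ∑ x ∈ Y, G x ^ 2 := by
  classical
  set Y : Finset ℤ := X ∪ X.biUnion (fun x => (Finset.Ioo (-(N x : ℤ)) (N x)).image (fun n => x + n))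
  refine ⟨Y, ?_⟩
  have h1 := hl_primal Y N hN G hG
  have h2 : ∀ x ∈ X, (boxAvg (N x) 1 G x) ^ 2 ≤ 16 * (∑ z ∈ Y, hlK (N x) (x - z) * G z) ^ 2 := by
    intro x hx
    have : boxAvg (N x) 1 G x ≤ 4 * (∑ z ∈ Y, hlK (N x) (x - z) * G z) := by
      unfold boxAvg
      calc _ ≤ ∑ n ∈ Finset.Ioo (-(N x : ℤ)) (N x), 4 * hlK (N x) (x - (x + n)) * G (x + n) := by
            rw [Finset.mul_sum]
            apply Finset.sum_le_sum; intro n hn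
            rw [show x - (x + n) = -n by ring, hlK_neg]
            simp only [Nat.cast_one, one_mul]
            exact mul_le_mul_of_nonneg_right (hlK_box (hN x) hn) (hG _)
        _ = ∑ z ∈ (Finset.Ioo (-(N x : ℤ)) (N x)).image (fun n => x + n),
              4 * hlK (N x) (x - z) * G z := by
            rw [Finset.sum_image (by intro a _ b _ h; simpa using h)]
        _ ≤ ∑ z ∈ Y, 4 * hlK (N x) (x - z) * G z := by
            apply Finset.sum_le_sum_of_subset_of_nonneg
            · intro z hz
              exact Finset.mem_union_right _ (Finset.mem_biUnion.2 ⟨x, hx, hz⟩)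
            · intro z _ _
              have := hlK_nonneg (N x) (x - z)
              have := hG z
              positivity
        _ = _ := by rw [Finset.mul_sum]; simp_rw [mul_assoc]
    have h0 := boxAvg_nonneg (N x) 1 G hG x
    nlinarith
  calc _ ≤ ∑ x ∈ X, 16 * (∑ z ∈ Y, hlK (N x) (x - z) * G z) ^ 2 := Finset.sum_le_sum h2
    _ ≤ ∑ x ∈ Y, 16 * (∑ z ∈ Y, hlK (N x) (x - z) * G z) ^ 2 :=
        Finset.sum_le_sum_of_subset_of_nonneg Finset.subset_union_left
          (fun _ _ _ => by positivity)
    _ ≤ _ := by rw [← Finset.mul_sum]; linarith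

/-- squared `ℓ²` norm, as an extended nonnegative real -/
noncomputable def sqn (f : ℤ → ℝ) : ENNReal := ∑' x, ENNReal.ofReal (f x ^ 2)

lemma boxAvg_one_sqn (N : ℤ → ℕ) (hN : ∀ x, 1 ≤ N x) (G : ℤ → ℝ) (hG : ∀ x, 0 ≤ G x) :
    sqn (fun x => boxAvg (N x) 1 G x) ≤ ENNReal.ofReal (128 ^ 2) * sqn G := by
  unfold sqn
  rw [ENNReal.tsum_eq_iSup_sum]
  apply iSup_le
  intro X
  obtain ⟨Y, hY⟩ := boxAvg_one_finite X N hN G hG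
  rw [← ENNReal.ofReal_sum_of_nonneg (fun _ _ => sq_nonneg _)]
  calc _ ≤ ENNReal.ofReal (128 ^ 2 * ∑ x ∈ Y, G x ^ 2) := ENNReal.ofReal_le_ofReal hY
    _ = ENNReal.ofReal (128 ^ 2) * ∑ x ∈ Y, ENNReal.ofReal (G x ^ 2) := by
      rw [ENNReal.ofReal_mul (by positivity), ENNReal.ofReal_sum_of_nonneg (fun _ _ => sq_nonneg _)]
    _ ≤ _ := by
      gcongr
      exact ENNReal.sum_le_tsum Y

lemma tsum_mod (M : ℕ) [NeZero M] (F : ℤ → ENNReal) :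
    ∑' x, F x = ∑' r : Fin M, ∑' t : ℤ, F (r + M * t) := by
  rw [← (Int.divModEquiv M).symm.tsum_eq, ENNReal.tsum_prod', ENNReal.tsum_comm]
  apply tsum_congr; intro r
  apply tsum_congr; intro t
  congr 1
  simp [Int.divModEquiv]
  ring

lemma boxAvg_sqn (M : ℕ) (hM : 1 ≤ M) (N : ℤ → ℕ) (hN : ∀ x, 1 ≤ N x) (G : ℤ → ℝ)
    (hG : ∀ x, 0 ≤ G x) :
    sqn (fun x => boxAvg (N x) M G x) ≤ ENNReal.ofReal (128 ^ 2) * sqn G := by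
  have : NeZero M := ⟨by omega⟩
  unfold sqn
  rw [tsum_mod M, tsum_mod M (fun x => ENNReal.ofReal (G x ^ 2)), ← ENNReal.tsum_mul_left]
  apply ENNReal.tsum_le_tsum
  intro r
  have := boxAvg_one_sqn (fun t => N (r + M * t)) (fun t => hN _) (fun t => G (r + M * t))
    (fun t => hG _)
  unfold sqn at this
  convert this using 5 with t
  unfold boxAvg
  beta_reduce
  congr 1
  apply Finset.sum_congr rfl; intro n _
  congr 1
  push_cast
  ring

/-! ### Large sieve -/

open ComplexConjugate in
lemma ls_dual (s : Finset ℂ) (N : ℕ) (G : ℝ) (hG0 : 0 ≤ G) (hz : ∀ z ∈ s, ‖z‖ = 1)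
    (hG : ∀ z ∈ s, ∀ w ∈ s, z ≠ w → ‖∑ j ∈ Finset.range N, (z * conj w) ^ j‖ ≤ G)
    (hN : s.card * G ≤ N) (b : ℂ → ℂ) :
    ∑ j ∈ Finset.range N, ‖∑ z ∈ s, b z * z ^ j‖ ^ 2 ≤ 2 * N * ∑ z ∈ s, ‖b z‖ ^ 2 := by
  classical
  have h1 : ((∑ j ∈ Finset.range N, ‖∑ z ∈ s, b z * z ^ j‖ ^ 2 : ℝ) : ℂ) =
      ∑ z ∈ s, ∑ w ∈ s, b z * conj (b w) * ∑ j ∈ Finset.range N, (z * conj w) ^ j := by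
    push_cast
    simp_rw [← Complex.mul_conj', map_sum, Finset.sum_mul_sum, Finset.mul_sum]
    rw [Finset.sum_comm]
    apply Finset.sum_congr rfl; intro z _
    rw [Finset.sum_comm]
    apply Finset.sum_congr rfl; intro w _
    apply Finset.sum_congr rfl; intro j _
    simp only [map_mul, map_pow]
    ring
  have h2 : ∑ j ∈ Finset.range N, ‖∑ z ∈ s, b z * z ^ j‖ ^ 2 ≤
      ∑ z ∈ s, ∑ w ∈ s, ‖b z‖ * ‖b w‖ * ((if z = w then (N:ℝ) else 0) + G) := by
    have h0 : 0 ≤ ∑ j ∈ Finset.range N, ‖∑ z ∈ s, b z * z ^ j‖ ^ 2 :=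
      Finset.sum_nonneg fun _ _ => by positivity
    rw [← Complex.norm_of_nonneg h0, h1]
    refine (norm_sum_le _ _).trans (Finset.sum_le_sum fun z hzs => ?_)
    refine (norm_sum_le _ _).trans (Finset.sum_le_sum fun w hws => ?_)
    rw [norm_mul, norm_mul, RCLike.norm_conj]
    apply mul_le_mul_of_nonneg_left _ (by positivity)
    split_ifs with h
    · calc _ ≤ ∑ j ∈ Finset.range N, ‖(z * conj w) ^ j‖ := norm_sum_le _ _
        _ = N := by simp [hz z hzs, hz w hws]
        _ ≤ N + G := by linarith
    · rw [zero_add]; exact hG z hzs w hws h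
  have h3 : ∑ z ∈ s, ∑ w ∈ s, ‖b z‖ * ‖b w‖ * ((if z = w then (N:ℝ) else 0) + G) =
      N * ∑ z ∈ s, ‖b z‖ ^ 2 + G * (∑ z ∈ s, ‖b z‖) ^ 2 := by
    simp_rw [mul_add, Finset.sum_add_distrib]
    congr 1
    · rw [Finset.mul_sum]
      apply Finset.sum_congr rfl; intro z hzs
      simp [hzs]; ring
    · rw [pow_two, Finset.sum_mul_sum, Finset.mul_sum]
      apply Finset.sum_congr rfl; intro z _
      rw [Finset.mul_sum]
      apply Finset.sum_congr rfl; intro w _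
      ring
  have h4 : (∑ z ∈ s, ‖b z‖) ^ 2 ≤ s.card * ∑ z ∈ s, ‖b z‖ ^ 2 := sq_sum_le_card_mul_sum_sq
  have h5 : 0 ≤ ∑ z ∈ s, ‖b z‖ ^ 2 := Finset.sum_nonneg fun _ _ => by positivity
  calc _ ≤ _ := h2
    _ = _ := h3
    _ ≤ N * ∑ z ∈ s, ‖b z‖ ^ 2 + G * (s.card * ∑ z ∈ s, ‖b z‖ ^ 2) := by gcongr
    _ = N * ∑ z ∈ s, ‖b z‖ ^ 2 + (s.card * G) * ∑ z ∈ s, ‖b z‖ ^ 2 := by ring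
    _ ≤ N * ∑ z ∈ s, ‖b z‖ ^ 2 + N * ∑ z ∈ s, ‖b z‖ ^ 2 := by gcongr
    _ = _ := by ring

open ComplexConjugate in
lemma ls_primal (s : Finset ℂ) (N : ℕ) (G : ℝ) (hG0 : 0 ≤ G) (hz : ∀ z ∈ s, ‖z‖ = 1)
    (hG : ∀ z ∈ s, ∀ w ∈ s, z ≠ w → ‖∑ j ∈ Finset.range N, (z * conj w) ^ j‖ ≤ G)
    (hN : s.card * G ≤ N) (a : ℕ → ℂ) :
    ∑ z ∈ s, ‖∑ j ∈ Finset.range N, a j * (conj z) ^ j‖ ^ 2 ≤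
      2 * N * ∑ j ∈ Finset.range N, ‖a j‖ ^ 2 := by
  set T : ℂ → ℂ := fun z => ∑ j ∈ Finset.range N, a j * (conj z) ^ j with hT
  have hd := ls_dual s N G hG0 hz hG hN T
  set S := ∑ z ∈ s, ‖T z‖ ^ 2 with hS
  rcases Nat.eq_zero_or_pos N with hN0 | hN0
  · subst hN0; simp [hS, hT]
  have hN' : (0:ℝ) < N := by exact_mod_cast hN0
  have h1 : (S : ℂ) = ∑ j ∈ Finset.range N, a j * conj (∑ z ∈ s, T z * z ^ j) := by
    simp only [hS]; push_cast
    simp_rw [← Complex.mul_conj', map_sum, Finset.mul_sum]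
    rw [Finset.sum_comm]
    apply Finset.sum_congr rfl; intro z _
    nth_rewrite 1 [hT]
    rw [Finset.sum_mul]
    apply Finset.sum_congr rfl; intro j _
    simp only [map_mul, map_pow]
    ring
  have hS0 : 0 ≤ S := Finset.sum_nonneg fun _ _ => by positivity
  have h2 : S ≤ ∑ j ∈ Finset.range N,
      (N * ‖a j‖ ^ 2 + ‖∑ z ∈ s, T z * z ^ j‖ ^ 2 / (4 * N)) := by
    rw [← Complex.norm_of_nonneg hS0, h1]
    refine (norm_sum_le _ _).trans (Finset.sum_le_sum fun j _ => ?_)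
    rw [norm_mul, RCLike.norm_conj]
    set u := ‖a j‖
    set v := ‖∑ z ∈ s, T z * z ^ j‖
    have : N * u ^ 2 + v ^ 2 / (4 * N) - u * v = N * (u - v / (2 * N)) ^ 2 := by
      field_simp; ring
    have : 0 ≤ N * (u - v / (2 * N)) ^ 2 := by positivity
    linarith
  rw [Finset.sum_add_distrib, ← Finset.mul_sum, ← Finset.sum_div] at h2
  have h3 : (∑ j ∈ Finset.range N, ‖∑ z ∈ s, T z * z ^ j‖ ^ 2) / (4 * N) ≤ S / 2 := by
    rw [div_le_iff₀ (by positivity)]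
    linarith
  linarith

/-- The averaging operator with weight `g`. -/
noncomputable def opA (N M : ℕ) (g : ℤ → ℝ) (f : ℤ → ℝ) (x : ℤ) : ℝ :=
  (1 / ((N : ℝ) * M)) * ∑ i ∈ Finset.range N, ∑ j ∈ Finset.range M,
    g ((i : ℤ) - j) * f (x + ((i : ℤ) - j))

lemma tsum_shift (F : ℤ → ENNReal) (a : ℤ) : ∑' x, F (x + a) = ∑' x, F x :=
  (Equiv.addRight a).tsum_eq F

open ComplexConjugate in
lemma opA_sqn_aux (s : Finset ℂ) (N M : ℕ) (hN0 : 1 ≤ N) (hM0 : 1 ≤ M) (G : ℝ) (hG0 : 0 ≤ G)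
    (hz : ∀ z ∈ s, ‖z‖ = 1)
    (hGN : ∀ z ∈ s, ∀ w ∈ s, z ≠ w → ‖∑ j ∈ Finset.range N, (z * conj w) ^ j‖ ≤ G)
    (hGM : ∀ z ∈ s, ∀ w ∈ s, z ≠ w → ‖∑ j ∈ Finset.range M, (z * conj w) ^ j‖ ≤ G)
    (hN : s.card * G ≤ N) (hM : s.card * G ≤ M) (c : ℂ → ℂ) (ε : ℝ)
    (hc : ∀ z ∈ s, ‖c z‖ ≤ ε) (g : ℤ → ℝ)
    (hg : ∀ n : ℤ, (g n : ℂ) = ∑ z ∈ s, c z * z ^ n) (f : ℤ → ℝ) :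
    sqn (opA N M g f) ≤ ENNReal.ofReal (4 * ε ^ 2) * sqn f := by
  have hN' : (0:ℝ) < N := by exact_mod_cast hN0
  have hM' : (0:ℝ) < M := by exact_mod_cast hM0
  set T : ℂ → ℤ → ℂ := fun z y => (1 / (M:ℂ)) * ∑ j ∈ Finset.range M, (f (y - j) : ℂ) * (conj z) ^ j
    with hT
  -- factorization
  have hfac : ∀ x, (opA N M g f x : ℂ) =
      (1 / (N:ℂ)) * ∑ i ∈ Finset.range N, ∑ z ∈ s, (c z * T z (x + i)) * z ^ i := by
    intro x
    unfold opA
    push_cast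
    rw [one_div, mul_inv, mul_assoc, one_div]
    congr 1
    rw [Finset.mul_sum]
    apply Finset.sum_congr rfl; intro i _
    simp only [hT]
    rw [Finset.mul_sum]
    simp_rw [hg, Finset.sum_mul, Finset.mul_sum, Finset.sum_mul]
    rw [Finset.sum_comm]
    apply Finset.sum_congr rfl; intro z hzs
    have hz1 := hz z hzs
    have hz0 : z ≠ 0 := by rintro rfl; simp at hz1
    have hconj : conj z = z⁻¹ := by
      rw [Complex.inv_def, Complex.normSq_eq_norm_sq, hz1]; simp
    apply Finset.sum_congr rfl; intro j _
    rw [hconj, zpow_sub₀ hz0, zpow_natCast, zpow_natCast, inv_pow, add_sub]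
    field_simp
  have hpt : ∀ x, (opA N M g f x) ^ 2 ≤
      (1 / N) * ∑ i ∈ Finset.range N, ‖∑ z ∈ s, (c z * T z (x + i)) * z ^ i‖ ^ 2 := by
    intro x
    have e1 : |opA N M g f x| = ‖(opA N M g f x : ℂ)‖ := by simp
    rw [← sq_abs, e1, hfac, norm_mul, mul_pow]
    have e2 : ‖∑ i ∈ Finset.range N, ∑ z ∈ s, (c z * T z (x + i)) * z ^ i‖ ^ 2 ≤
        N * ∑ i ∈ Finset.range N, ‖∑ z ∈ s, (c z * T z (x + i)) * z ^ i‖ ^ 2 := by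
      calc _ ≤ (∑ i ∈ Finset.range N, ‖∑ z ∈ s, (c z * T z (x + i)) * z ^ i‖) ^ 2 := by
            gcongr; exact norm_sum_le _ _
        _ ≤ (Finset.range N).card * ∑ i ∈ Finset.range N, ‖∑ z ∈ s, (c z * T z (x + i)) * z ^ i‖ ^ 2 :=
            sq_sum_le_card_mul_sum_sq
        _ = _ := by simp
    have e3 : ‖(1 / (N:ℂ))‖ = 1 / N := by simp
    rw [e3]
    calc _ ≤ (1 / (N:ℝ)) ^ 2 * (N * ∑ i ∈ Finset.range N, ‖∑ z ∈ s, (c z * T z (x + i)) * z ^ i‖ ^ 2) := by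
          gcongr
      _ = _ := by field_simp
  -- pointwise at y
  have hy : ∀ y : ℤ, (1 / N) * ∑ i ∈ Finset.range N, ‖∑ z ∈ s, (c z * T z y) * z ^ i‖ ^ 2 ≤
      4 * ε ^ 2 * ((1 / M) * ∑ j ∈ Finset.range M, f (y - j) ^ 2) := by
    intro y
    have d := ls_dual s N G hG0 hz hGN hN (fun z => c z * T z y)
    have p := ls_primal s M G hG0 hz hGM hM (fun j => (f (y - j) : ℂ))
    have e1 : ∑ z ∈ s, ‖c z * T z y‖ ^ 2 ≤ ε ^ 2 * ((1 / M) ^ 2 *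
        ∑ z ∈ s, ‖∑ j ∈ Finset.range M, (f (y - j) : ℂ) * (conj z) ^ j‖ ^ 2) := by
      rw [Finset.mul_sum, Finset.mul_sum]
      apply Finset.sum_le_sum; intro z hzs
      have e3 : ‖(1 / (M:ℂ))‖ = 1 / M := by simp
      rw [norm_mul, mul_pow]
      simp only [hT]
      rw [norm_mul, mul_pow, e3]
      have := hc z hzs
      gcongr
    simp only [Complex.norm_real, Real.norm_eq_abs, sq_abs] at p
    calc _ ≤ (1 / (N:ℝ)) * (2 * N * ∑ z ∈ s, ‖c z * T z y‖ ^ 2) := by gcongr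
      _ = 2 * ∑ z ∈ s, ‖c z * T z y‖ ^ 2 := by field_simp
      _ ≤ 2 * (ε ^ 2 * ((1 / M) ^ 2 * (2 * M * ∑ j ∈ Finset.range M, f (y - j) ^ 2))) := by
          refine mul_le_mul_of_nonneg_left (e1.trans ?_) (by norm_num)
          gcongr
      _ = _ := by field_simp; ring
  unfold sqn
  calc ∑' x, ENNReal.ofReal (opA N M g f x ^ 2)
      ≤ ∑' x, ∑ i ∈ Finset.range N,
          ENNReal.ofReal ((1 / N) * ‖∑ z ∈ s, (c z * T z (x + i)) * z ^ i‖ ^ 2) := by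
        apply ENNReal.tsum_le_tsum; intro x
        rw [← ENNReal.ofReal_sum_of_nonneg (fun _ _ => by positivity), ← Finset.mul_sum]
        exact ENNReal.ofReal_le_ofReal (hpt x)
    _ = ∑ i ∈ Finset.range N, ∑' x, 
          ENNReal.ofReal ((1 / N) * ‖∑ z ∈ s, (c z * T z (x + i)) * z ^ i‖ ^ 2) :=
        Summable.tsum_finsetSum (fun _ _ => ENNReal.summable)
    _ = ∑ i ∈ Finset.range N, ∑' y, 
          ENNReal.ofReal ((1 / N) * ‖∑ z ∈ s, (c z * T z y) * z ^ i‖ ^ 2) := by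
        apply Finset.sum_congr rfl; intro i _
        exact tsum_shift (fun y => ENNReal.ofReal ((1 / N) * ‖∑ z ∈ s, (c z * T z y) * z ^ i‖ ^ 2)) i
    _ = ∑' y, ∑ i ∈ Finset.range N,
          ENNReal.ofReal ((1 / N) * ‖∑ z ∈ s, (c z * T z y) * z ^ i‖ ^ 2) :=
        (Summable.tsum_finsetSum (fun _ _ => ENNReal.summable)).symm
    _ ≤ ∑' y, ∑ j ∈ Finset.range M, ENNReal.ofReal (4 * ε ^ 2 * (1 / M) * f (y - j) ^ 2) := by
        apply ENNReal.tsum_le_tsum; intro y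
        rw [← ENNReal.ofReal_sum_of_nonneg (fun _ _ => by positivity), ← Finset.mul_sum,
          ← ENNReal.ofReal_sum_of_nonneg (fun _ _ => by positivity), ← Finset.mul_sum, mul_assoc]
        exact ENNReal.ofReal_le_ofReal (hy y)
    _ = ∑ j ∈ Finset.range M, ∑' y, ENNReal.ofReal (4 * ε ^ 2 * (1 / M) * f (y - j) ^ 2) :=
        Summable.tsum_finsetSum (fun _ _ => ENNReal.summable)
    _ = ∑ j ∈ Finset.range M, ∑' y, ENNReal.ofReal (4 * ε ^ 2 * (1 / M) * f y ^ 2) := by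
        apply Finset.sum_congr rfl; intro j _
        exact tsum_shift (fun y => ENNReal.ofReal (4 * ε ^ 2 * (1 / M) * f y ^ 2)) (-j)
    _ = ENNReal.ofReal (4 * ε ^ 2) * ∑' y, ENNReal.ofReal (f y ^ 2) := by
        rw [Finset.sum_const, Finset.card_range]
        simp_rw [mul_assoc (4 * ε ^ 2)]
        simp_rw [fun y => ENNReal.ofReal_mul (p := 4 * ε ^ 2) (q := (1 / M) * f y ^ 2) (by positivity)]
        simp_rw [fun y => ENNReal.ofReal_mul (p := (1 / (M:ℝ))) (q := f y ^ 2) (by positivity)]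
        rw [ENNReal.tsum_mul_left, ENNReal.tsum_mul_left, nsmul_eq_mul]
        rw [← mul_assoc, ← mul_assoc, mul_comm (M : ENNReal), mul_assoc _ (M : ENNReal)]
        congr 1
        rw [← ENNReal.ofReal_natCast, ← ENNReal.ofReal_mul (by positivity)]
        rw [mul_one_div_cancel hM'.ne']
        simp

/-! ### Ramanujan sums -/

/-- Ramanujan sums. -/
noncomputable def ramS (q : ℕ) (n : ℤ) : ℂ := ∑ z ∈ primitiveRoots q ℂ, z ^ n

/-- `g` is a trigonometric polynomial with denominators at most `D`, coefficients at most `ε`. -/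
def TrigP (D : ℕ) (ε : ℝ) (g : ℤ → ℝ) : Prop :=
  ∃ c : ℕ → ℝ, (∀ q, |c q| ≤ ε) ∧ ∀ n, (g n : ℂ) = ∑ q ∈ Finset.Icc 1 D, (c q : ℂ) * ramS q n

lemma geom_bound (u : ℂ) (m : ℕ) (hm : 0 < m) (hum : u ^ m = 1) (hu1 : u ≠ 1) (N : ℕ) :
    ‖∑ j ∈ Finset.range N, u ^ j‖ ≤ m := by
  have hnu : ‖u‖ = 1 := Complex.norm_eq_one_of_pow_eq_one hum hm.ne'
  have h1 : ∑ j ∈ Finset.range N, u ^ j = ∑ j ∈ Finset.range (N % m), u ^ j := by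
    rw [geom_sum_eq hu1, geom_sum_eq hu1]
    congr 2
    conv_lhs => rw [← Nat.div_add_mod N m]
    rw [pow_add, pow_mul, hum, one_pow, one_mul]
  rw [h1]
  calc _ ≤ ∑ j ∈ Finset.range (N % m), ‖u ^ j‖ := norm_sum_le _ _
    _ = ((N % m : ℕ) : ℝ) := by simp [hnu]
    _ ≤ m := by exact_mod_cast (Nat.mod_lt _ hm).le

open ComplexConjugate in
lemma opA_trigP {D : ℕ} {ε : ℝ} {g : ℤ → ℝ} (hD : 1 ≤ D) (hg : TrigP D ε g) (N M : ℕ)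
    (hN : D ^ 4 ≤ N) (hM : D ^ 4 ≤ M) (f : ℤ → ℝ) :
    sqn (opA N M g f) ≤ ENNReal.ofReal (4 * ε ^ 2) * sqn f := by
  classical
  obtain ⟨c, hc, hgc⟩ := hg
  set s : Finset ℂ := (Finset.Icc 1 D).biUnion (fun q => primitiveRoots q ℂ) with hs
  have hmem : ∀ z ∈ s, ∃ q, 1 ≤ q ∧ q ≤ D ∧ IsPrimitiveRoot z q := by
    intro z hz
    obtain ⟨q, hq, hzq⟩ := Finset.mem_biUnion.1 hz
    rw [Finset.mem_Icc] at hq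
    exact ⟨q, hq.1, hq.2, isPrimitiveRoot_of_mem_primitiveRoots hzq⟩
  have hnorm : ∀ z ∈ s, ‖z‖ = 1 := by
    intro z hz
    obtain ⟨q, hq, _, h⟩ := hmem z hz
    exact Complex.norm_eq_one_of_pow_eq_one h.pow_eq_one (by omega)
  have hgeom : ∀ L : ℕ, ∀ z ∈ s, ∀ w ∈ s, z ≠ w →
      ‖∑ j ∈ Finset.range L, (z * conj w) ^ j‖ ≤ (D:ℝ) ^ 2 := by
    intro L z hz w hw hzw
    obtain ⟨q, hq, hqD, h⟩ := hmem z hz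
    obtain ⟨r, hr, hrD, h'⟩ := hmem w hw
    have hw1 := hnorm w hw
    have hw0 : w ≠ 0 := by rintro rfl; simp at hw1
    have hconj : conj w = w⁻¹ := by
      rw [Complex.inv_def, Complex.normSq_eq_norm_sq, hw1]; simp
    rw [hconj]
    have := geom_bound (z * w⁻¹) (q * r) (by positivity) (by
      rw [mul_pow, pow_mul, h.pow_eq_one, one_pow, mul_comm q r, inv_pow, pow_mul w, h'.pow_eq_one]
      simp) (by
      intro h1
      apply hzw
      field_simp at h1
      exact h1) L
    refine this.trans ?_
    push_cast
    rw [pow_two]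
    gcongr
  have hcard : (s.card : ℝ) * (D:ℝ) ^ 2 ≤ ((D ^ 4 : ℕ) : ℝ) := by
    have h1 : s.card ≤ D * D := by
      calc s.card ≤ ∑ q ∈ Finset.Icc 1 D, (primitiveRoots q ℂ).card := Finset.card_biUnion_le
        _ ≤ ∑ q ∈ Finset.Icc 1 D, D := by
            apply Finset.sum_le_sum; intro q hq
            rw [Complex.card_primitiveRoots]
            exact (Nat.totient_le q).trans (Finset.mem_Icc.1 hq).2
        _ = D * D := by simp
    have h2 : (s.card : ℝ) ≤ D * D := by exact_mod_cast h1
    push_cast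
    calc _ ≤ (D:ℝ) * D * D ^ 2 := by gcongr
      _ = _ := by ring
  have hD4 : 1 ≤ D ^ 4 := Nat.one_le_pow _ _ hD
  refine opA_sqn_aux s N M (by omega) (by omega) ((D:ℝ)^2) (by positivity) hnorm (hgeom N) (hgeom M)
    (hcard.trans (by exact_mod_cast hN)) (hcard.trans (by exact_mod_cast hM))
    (fun z => (c (orderOf z) : ℂ)) ε (fun z _ => ?_) g (fun n => ?_) f
  · simpa using hc (orderOf z)
  · rw [hgc, hs, Finset.sum_biUnion (fun a _ b _ hab => IsPrimitiveRoot.disjoint hab)]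
    apply Finset.sum_congr rfl; intro q _
    unfold ramS
    rw [Finset.mul_sum]
    apply Finset.sum_congr rfl; intro z hz
    rw [← (isPrimitiveRoot_of_mem_primitiveRoots hz).eq_orderOf]

lemma sum_nthRoots (q : ℕ) (hq : 0 < q) (n : ℤ) :
    ∑ z ∈ Polynomial.nthRootsFinset q (1:ℂ), z ^ n = if (q:ℤ) ∣ n then (q:ℂ) else 0 := by
  have hζ := Complex.isPrimitiveRoot_exp q hq.ne'
  set ζ := Complex.exp (2 * Real.pi * Complex.I / q)
  split_ifs with h
  · obtain ⟨m, rfl⟩ := h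
    rw [Finset.sum_congr rfl (g := fun _ => (1:ℂ))]
    · rw [Finset.sum_const, hζ.card_nthRootsFinset]; simp
    · intro z hz
      rw [Polynomial.mem_nthRootsFinset hq] at hz
      rw [zpow_mul, zpow_natCast, hz, one_zpow]
  · have hζ0 : ζ ≠ 0 := hζ.ne_zero hq.ne'
    set S := ∑ z ∈ Polynomial.nthRootsFinset q (1:ℂ), z ^ n with hS
    have h1 : S = ζ ^ n * S := by
      rw [hS, Finset.mul_sum]
      symm
      apply Finset.sum_nbij' (fun z => ζ * z) (fun z => ζ⁻¹ * z)
      · intro z hz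
        rw [Polynomial.mem_nthRootsFinset hq] at hz ⊢
        rw [mul_pow, hz, hζ.pow_eq_one, one_mul]
      · intro z hz
        rw [Polynomial.mem_nthRootsFinset hq] at hz ⊢
        rw [mul_pow, hz, inv_pow, hζ.pow_eq_one]; simp
      · intro z _; field_simp
      · intro z _; field_simp
      · intro z _; rw [mul_zpow]
    have h2 : ζ ^ n ≠ 1 := fun h3 => h ((hζ.zpow_eq_one_iff_dvd n).1 h3)
    have h3 : (ζ ^ n - 1) * S = 0 := by rw [sub_mul, one_mul, ← h1, sub_self]
    rcases mul_eq_zero.1 h3 with h4 | h4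
    · exact absurd (sub_eq_zero.1 h4) h2
    · exact h4

lemma sum_divisors_prod (S : Finset ℕ) (hS : ∀ p ∈ S, p.Prime) (F : ℕ → ℂ) :
    ∑ d ∈ (∏ p ∈ S, p).divisors, F d = ∑ T ∈ S.powerset, F (∏ p ∈ T, p) := by
  have hne : (∏ p ∈ S, p) ≠ 0 := Finset.prod_ne_zero_iff.2 fun p hp => (hS p hp).ne_zero
  have hsq : Squarefree (∏ p ∈ S, p) := by
    have := Nat.primeFactors_prod hS
    apply Finset.squarefree_prod_of_pairwise_isCoprime
    · intro p hp q hq hpq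
      exact (Nat.coprime_iff_isRelPrime.1 ((Nat.coprime_primes (hS p hp) (hS q hq)).2 hpq))
    · intro p hp; exact (hS p hp).prime.squarefree
  symm
  apply Finset.sum_nbij' (fun T => ∏ p ∈ T, p) (fun d => d.primeFactors)
  · intro T hT
    rw [Nat.mem_divisors]
    exact ⟨Finset.prod_dvd_prod_of_subset _ _ _ (Finset.mem_powerset.1 hT), hne⟩
  · intro d hd
    rw [Nat.mem_divisors] at hd
    rw [Finset.mem_powerset, ← Nat.primeFactors_prod hS]
    exact Nat.primeFactors_mono hd.1 hne
  · intro T hT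
    exact Nat.primeFactors_prod fun p hp => hS p (Finset.mem_powerset.1 hT hp)
  · intro d hd
    rw [Nat.mem_divisors] at hd
    exact Nat.prod_primeFactors_of_squarefree (hsq.squarefree_of_dvd hd.1)
  · intro T _; rfl

lemma finsetProd_dvd_iff (S : Finset ℕ) (hS : ∀ p ∈ S, p.Prime) (n : ℤ) :
    ((∏ p ∈ S, p : ℕ) : ℤ) ∣ n ↔ ∀ p ∈ S, (p : ℤ) ∣ n := by
  constructor
  · intro h p hp
    exact (Int.natCast_dvd_natCast.2 (Finset.dvd_prod_of_mem _ hp)).trans h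
  · intro h
    push_cast
    apply Finset.prod_dvd_of_coprime
    · intro p hp q hq hpq
      exact Nat.isCoprime_iff_coprime.2 ((Nat.coprime_primes (hS p hp) (hS q hq)).2 hpq)
    · exact h

lemma ramS_eq (S : Finset ℕ) (hS : ∀ p ∈ S, p.Prime) (n : ℤ) :
    ramS (∏ p ∈ S, p) n = ∏ p ∈ S, (if (p:ℤ) ∣ n then (p:ℂ) - 1 else -1) := by
  classical
  induction S using Finset.strongInduction with
  | H S ih =>
    have hpos : 0 < (∏ p ∈ S, p) := Finset.prod_pos fun p hp => (hS p hp).pos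
    have h1 := sum_nthRoots (∏ p ∈ S, p) hpos n
    rw [IsPrimitiveRoot.nthRoots_one_eq_biUnion_primitiveRoots,
      Finset.sum_biUnion (fun a _ b _ hab => IsPrimitiveRoot.disjoint hab)] at h1
    change ∑ d ∈ (∏ p ∈ S, p).divisors, ramS d n = _ at h1
    rw [sum_divisors_prod S hS] at h1
    have h2 : ∑ T ∈ S.powerset, ∏ p ∈ T, (if (p:ℤ) ∣ n then (p:ℂ) - 1 else -1) =
        if ((∏ p ∈ S, p : ℕ) : ℤ) ∣ n then ((∏ p ∈ S, p : ℕ) : ℂ) else 0 := by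
      rw [← Finset.prod_one_add]
      split_ifs with h
      · rw [finsetProd_dvd_iff S hS] at h
        push_cast
        apply Finset.prod_congr rfl; intro p hp
        rw [if_pos (h p hp)]; ring
      · rw [finsetProd_dvd_iff S hS] at h
        push Not at h
        obtain ⟨p, hp, hpn⟩ := h
        apply Finset.prod_eq_zero hp
        rw [if_neg hpn]; ring
    rw [← h2, ← Finset.sum_erase_add _ _ (Finset.mem_powerset_self S),
      ← Finset.sum_erase_add (a := S) _ _ (Finset.mem_powerset_self S)] at h1
    have h3 : ∑ T ∈ S.powerset.erase S, ramS (∏ p ∈ T, p) n =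
        ∑ T ∈ S.powerset.erase S, ∏ p ∈ T, (if (p:ℤ) ∣ n then (p:ℂ) - 1 else -1) := by
      apply Finset.sum_congr rfl; intro T hT
      rw [Finset.mem_erase, Finset.mem_powerset] at hT
      exact ih T (Finset.ssubset_iff_subset_ne.2 ⟨hT.2, hT.1⟩) (fun p hp => hS p (hT.2 hp))
    rw [h3] at h1
    exact add_left_cancel h1

/-- local factor -/
noncomputable def bloc (p : ℕ) (n : ℤ) : ℝ := if (p:ℤ) ∣ n then -1 else 1 / ((p:ℝ) - 1)

/-- product of local factors -/
noncomputable def bS (S : Finset ℕ) (n : ℤ) : ℝ := ∏ p ∈ S, bloc p n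

/-- product of `1/(p-1)` -/
noncomputable def phiInv (S : Finset ℕ) : ℝ := ∏ p ∈ S, (1 / ((p:ℝ) - 1))

lemma bS_eq (S : Finset ℕ) (hS : ∀ p ∈ S, p.Prime) (n : ℤ) :
    (bS S n : ℂ) = (((-1) ^ S.card * phiInv S : ℝ) : ℂ) * ramS (∏ p ∈ S, p) n := by
  rw [ramS_eq S hS]
  unfold bS phiInv
  rw [← Finset.prod_const, ← Finset.prod_mul_distrib]
  push_cast
  rw [← Finset.prod_mul_distrib]
  apply Finset.prod_congr rfl; intro p hp
  have h2 := (hS p hp).one_lt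
  have h3 : (p:ℂ) - 1 ≠ 0 := by
    rw [sub_ne_zero]; exact_mod_cast h2.ne'
  unfold bloc
  split_ifs
  · push_cast; field_simp
  · push_cast; field_simp

lemma trigP_of_sum (D : ℕ) (ε : ℝ) (hε : 0 ≤ ε) (F : Finset (Finset ℕ))
    (hF : ∀ S ∈ F, ∀ p ∈ S, p.Prime) (hD : ∀ S ∈ F, ∏ p ∈ S, p ≤ D) (e : Finset ℕ → ℝ)
    (he : ∀ S ∈ F, |e S| * phiInv S ≤ ε) (g : ℤ → ℝ) (hg : ∀ n, g n = ∑ S ∈ F, e S * bS S n) :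
    TrigP D ε g := by
  classical
  have hphi : ∀ S ∈ F, 0 ≤ phiInv S := by
    intro S hS
    apply Finset.prod_nonneg
    intro p hp
    have : (1:ℝ) ≤ p := by exact_mod_cast (hF S hS p hp).one_le
    exact one_div_nonneg.2 (by linarith)
  refine ⟨fun q => if q.primeFactors ∈ F ∧ Squarefree q then e q.primeFactors *
    ((-1) ^ q.primeFactors.card * phiInv q.primeFactors) else 0, ?_, ?_⟩
  · intro q
    beta_reduce
    split_ifs with h
    · rw [abs_mul, abs_mul, abs_pow, abs_neg, abs_one, one_pow, one_mul, abs_of_nonneg (hphi _ h.1)]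
      exact he _ h.1
    · simpa using hε
  · intro n
    rw [hg]
    push_cast
    symm
    have hinj : Set.InjOn (fun S : Finset ℕ => ∏ p ∈ S, p) F := by
      intro S hS T hT h
      have := congrArg Nat.primeFactors h
      simp only at this
      rwa [Nat.primeFactors_prod (hF S hS), Nat.primeFactors_prod (hF T hT)] at this
    have hsub : F.image (fun S => ∏ p ∈ S, p) ⊆ Finset.Icc 1 D := by
      intro q hq
      obtain ⟨S, hS, rfl⟩ := Finset.mem_image.1 hq
      rw [Finset.mem_Icc]
      exact ⟨Finset.prod_pos fun p hp => (hF S hS p hp).pos, hD S hS⟩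
    rw [← Finset.sum_subset hsub, Finset.sum_image hinj]
    · apply Finset.sum_congr rfl; intro S hS
      have hsq : Squarefree (∏ p ∈ S, p) := by
        apply Finset.squarefree_prod_of_pairwise_isCoprime
        · intro p hp q hq hpq
          exact (Nat.coprime_iff_isRelPrime.1 ((Nat.coprime_primes (hF S hS p hp) (hF S hS q hq)).2 hpq))
        · intro p hp; exact (hF S hS p hp).prime.squarefree
      rw [Nat.primeFactors_prod (hF S hS), if_pos ⟨hS, hsq⟩, bS_eq S (hF S hS)]
      push_cast
      ring
    · intro q _ hq
      rw [if_neg]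
      · simp
      · rintro ⟨h1, h2⟩
        exact hq (Finset.mem_image.2 ⟨_, h1, Nat.prod_primeFactors_of_squarefree h2⟩)


lemma bloc_sq (p : ℕ) (hp : p.Prime) (n : ℤ) :
    bloc p n * bloc p n = 1 / ((p:ℝ) - 1) - (((p:ℝ) - 2) / ((p:ℝ) - 1)) * bloc p n := by
  have h : (1:ℝ) < p := by exact_mod_cast hp.one_lt
  have h3 : (p:ℝ) - 1 ≠ 0 := by linarith
  unfold bloc
  split_ifs
  · field_simp; ring
  · field_simp; ring

lemma phiInv_nonneg (S : Finset ℕ) (hS : ∀ p ∈ S, p.Prime) : 0 ≤ phiInv S := by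
  apply Finset.prod_nonneg
  intro p hp
  have : (1:ℝ) ≤ p := by exact_mod_cast (hS p hp).one_le
  exact one_div_nonneg.2 (by linarith)

/-- bilinear form -/
noncomputable def selB (P : Finset ℕ) (a b : Finset ℕ → ℝ) : ℝ :=
  ∑ S ∈ P.powerset, a S * b S * phiInv S

lemma selB_mono (P : Finset ℕ) (hP : ∀ p ∈ P, p.Prime) (a b a' b' : Finset ℕ → ℝ)
    (ha : ∀ S, 0 ≤ a S) (hb : ∀ S, 0 ≤ b S) (haa : ∀ S, a S ≤ a' S) (hbb : ∀ S, b S ≤ b' S) :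
    selB P a b ≤ selB P a' b' := by
  apply Finset.sum_le_sum
  intro S hS
  apply mul_le_mul_of_nonneg_right _ (phiInv_nonneg S fun p hp => hP p (Finset.mem_powerset.1 hS hp))
  exact mul_le_mul (haa S) (hbb S) (hb S) ((ha S).trans (haa S))

lemma selB_nonneg (P : Finset ℕ) (hP : ∀ p ∈ P, p.Prime) (a b : Finset ℕ → ℝ)
    (ha : ∀ S, 0 ≤ a S) (hb : ∀ S, 0 ≤ b S) : 0 ≤ selB P a b := by
  apply Finset.sum_nonneg
  intro S hS
  exact mul_nonneg (mul_nonneg (ha S) (hb S))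
    (phiInv_nonneg S fun p hp => hP p (Finset.mem_powerset.1 hS hp))

lemma sum_insert_bS (p : ℕ) (P : Finset ℕ) (hp : p ∉ P) (a : Finset ℕ → ℝ) (n : ℤ) :
    ∑ S ∈ (insert p P).powerset, a S * bS S n = (∑ S ∈ P.powerset, a S * bS S n) +
      bloc p n * ∑ S ∈ P.powerset, a (insert p S) * bS S n := by
  rw [Finset.sum_powerset_insert hp, Finset.mul_sum]
  congr 1
  apply Finset.sum_congr rfl
  intro S hS
  have : p ∉ S := fun h => hp (Finset.mem_powerset.1 hS h)
  unfold bS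
  rw [Finset.prod_insert this]; ring

lemma sel_prod (P : Finset ℕ) : (∀ p ∈ P, p.Prime) → ∀ a b : Finset ℕ → ℝ,
    (∀ S, 0 ≤ a S) → (∀ S, 0 ≤ b S) → (∀ S T, S ⊆ T → a T ≤ a S) → (∀ S T, S ⊆ T → b T ≤ b S) →
    ∃ E : Finset ℕ → ℝ,
      (∀ n, (∑ S ∈ P.powerset, a S * bS S n) * (∑ S ∈ P.powerset, b S * bS S n) =
        ∑ Q ∈ P.powerset, E Q * bS Q n) ∧ E ∅ = selB P a b ∧
      (∀ Q ⊆ P, |E Q| ≤ 3 ^ Q.card * selB P a b) ∧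
      (∀ Q ⊆ P, E Q ≠ 0 → ∃ S ⊆ P, ∃ T ⊆ P, a S ≠ 0 ∧ b T ≠ 0 ∧ Q ⊆ S ∪ T) := by
  classical
  induction P using Finset.induction with
  | empty =>
    intro _ a b ha hb _ _
    refine ⟨fun _ => a ∅ * b ∅, ?_, ?_, ?_, ?_⟩
    · intro n; simp [bS]
    · simp [selB, phiInv]
    · intro Q hQ
      rw [Finset.subset_empty] at hQ
      subst hQ
      simp only [selB, Finset.powerset_empty, Finset.sum_singleton, phiInv, Finset.prod_empty,
        Finset.card_empty, pow_zero, one_mul, mul_one]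
      rw [abs_of_nonneg (mul_nonneg (ha _) (hb _))]
    · intro Q hQ h
      refine ⟨∅, by simp, ∅, by simp, left_ne_zero_of_mul h, right_ne_zero_of_mul h, ?_⟩
      simpa using hQ
  | insert p P hp ih =>
    intro hP a b ha hb hA hB
    have hP' : ∀ q ∈ P, q.Prime := fun q hq => hP q (Finset.mem_insert_of_mem hq)
    have hpp : p.Prime := hP p (Finset.mem_insert_self _ _)
    have hp2 : (2:ℝ) ≤ p := by exact_mod_cast hpp.two_le
    set a1 : Finset ℕ → ℝ := fun S => a (insert p S) with ha1
    set b1 : Finset ℕ → ℝ := fun S => b (insert p S) with hb1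
    have ha1n : ∀ S, 0 ≤ a1 S := fun S => ha _
    have hb1n : ∀ S, 0 ≤ b1 S := fun S => hb _
    have hA1 : ∀ S T, S ⊆ T → a1 T ≤ a1 S := fun S T h => hA _ _ (Finset.insert_subset_insert p h)
    have hB1 : ∀ S T, S ⊆ T → b1 T ≤ b1 S := fun S T h => hB _ _ (Finset.insert_subset_insert p h)
    have haa : ∀ S, a1 S ≤ a S := fun S => hA _ _ (Finset.subset_insert p S)
    have hbb : ∀ S, b1 S ≤ b S := fun S => hB _ _ (Finset.subset_insert p S)
    obtain ⟨E00, h00, z00, c00, s00⟩ := ih hP' a b ha hb hA hB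
    obtain ⟨E01, h01, z01, c01, s01⟩ := ih hP' a b1 ha hb1n hA hB1
    obtain ⟨E10, h10, z10, c10, s10⟩ := ih hP' a1 b ha1n hb hA1 hB
    obtain ⟨E11, h11, z11, c11, s11⟩ := ih hP' a1 b1 ha1n hb1n hA1 hB1
    have hBi : selB (insert p P) a b = selB P a b + 1 / ((p:ℝ) - 1) * selB P a1 b1 := by
      unfold selB
      rw [Finset.sum_powerset_insert hp, Finset.mul_sum]
      congr 1
      apply Finset.sum_congr rfl
      intro S hS
      have : p ∉ S := fun h => hp (Finset.mem_powerset.1 hS h)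
      unfold phiInv
      rw [Finset.prod_insert this]; ring
    have hn00 := selB_nonneg P hP' a b ha hb
    have hn11 := selB_nonneg P hP' a1 b1 ha1n hb1n
    have hpi : 0 ≤ 1 / ((p:ℝ) - 1) := one_div_nonneg.2 (by linarith)
    have hBge : selB P a b ≤ selB (insert p P) a b := by
      rw [hBi]; linarith [mul_nonneg hpi hn11]
    set γ : ℝ := ((p:ℝ) - 2) / ((p:ℝ) - 1) with hγ
    have hγ0 : 0 ≤ γ := div_nonneg (by linarith) (by linarith)
    have hγ1 : γ ≤ 1 := by rw [hγ, div_le_one (by linarith)]; linarith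
    refine ⟨fun Q => if p ∈ Q then E01 (Q.erase p) + E10 (Q.erase p) - γ * E11 (Q.erase p)
      else E00 Q + 1 / ((p:ℝ) - 1) * E11 Q, ?_, ?_, ?_, ?_⟩
    · intro n
      rw [sum_insert_bS p P hp, sum_insert_bS p P hp, sum_insert_bS p P hp]
      have e1 : ∑ Q ∈ P.powerset, (if p ∈ Q then E01 (Q.erase p) + E10 (Q.erase p) -
          γ * E11 (Q.erase p) else E00 Q + 1 / ((p:ℝ) - 1) * E11 Q) * bS Q n =
          ∑ Q ∈ P.powerset, E00 Q * bS Q n + 1 / ((p:ℝ) - 1) * ∑ Q ∈ P.powerset, E11 Q * bS Q n := by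
        rw [Finset.mul_sum, ← Finset.sum_add_distrib]
        apply Finset.sum_congr rfl
        intro S hS
        have : p ∉ S := fun h => hp (Finset.mem_powerset.1 hS h)
        rw [if_neg this]; ring
      have e2 : ∑ Q ∈ P.powerset, (if p ∈ insert p Q then E01 ((insert p Q).erase p) +
          E10 ((insert p Q).erase p) -
          γ * E11 ((insert p Q).erase p) else E00 (insert p Q) + 1 / ((p:ℝ) - 1) * E11 (insert p Q))
            * bS Q n =
          ∑ Q ∈ P.powerset, E01 Q * bS Q n + ∑ Q ∈ P.powerset, E10 Q * bS Q n
          - γ * ∑ Q ∈ P.powerset, E11 Q * bS Q n := by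
        rw [Finset.mul_sum, ← Finset.sum_add_distrib, ← Finset.sum_sub_distrib]
        apply Finset.sum_congr rfl
        intro S hS
        have : p ∉ S := fun h => hp (Finset.mem_powerset.1 hS h)
        rw [if_pos (Finset.mem_insert_self _ _), Finset.erase_insert this]; ring
      rw [e1, e2, ← h00, ← h01, ← h10, ← h11]
      have hsq := bloc_sq p hpp n
      rw [← hγ] at hsq
      simp only [ha1, hb1]
      linear_combination (∑ S ∈ P.powerset, a (insert p S) * bS S n) *
        (∑ S ∈ P.powerset, b (insert p S) * bS S n) * hsq
    · simp only [Finset.notMem_empty, if_false]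
      rw [z00, z11, hBi]
    · intro Q hQ
      beta_reduce
      split_ifs with hpQ
      · have hQ' : Q.erase p ⊆ P := by
          rw [← Finset.erase_insert hp]; exact Finset.erase_subset_erase p hQ
        have hc : Q.card = (Q.erase p).card + 1 := (Finset.card_erase_add_one hpQ).symm
        have k1 := c01 _ hQ'
        have k2 := c10 _ hQ'
        have k3 := c11 _ hQ'
        have m1 := selB_mono P hP' a b1 a b ha hb1n (fun _ => le_rfl) hbb
        have m2 := selB_mono P hP' a1 b a b ha1n hb haa (fun _ => le_rfl)
        have m3 := selB_mono P hP' a1 b1 a b ha1n hb1n haa hbb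
        have h3 : (0:ℝ) ≤ 3 ^ (Q.erase p).card := by positivity
        calc _ ≤ |E01 (Q.erase p)| + |E10 (Q.erase p)| + γ * |E11 (Q.erase p)| := by
              refine (abs_sub _ _).trans ?_
              rw [abs_mul, abs_of_nonneg hγ0]
              gcongr
              exact abs_add_le _ _
          _ ≤ |E01 (Q.erase p)| + |E10 (Q.erase p)| + 1 * |E11 (Q.erase p)| := by gcongr
          _ ≤ 3 ^ (Q.erase p).card * selB P a b + 3 ^ (Q.erase p).card * selB P a b +
              1 * (3 ^ (Q.erase p).card * selB P a b) := by
                gcongr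
                · exact k1.trans (mul_le_mul_of_nonneg_left m1 h3)
                · exact k2.trans (mul_le_mul_of_nonneg_left m2 h3)
                · exact k3.trans (mul_le_mul_of_nonneg_left m3 h3)
          _ = 3 ^ Q.card * selB P a b := by rw [hc]; ring
          _ ≤ _ := by gcongr
      · have hQ' : Q ⊆ P := (Finset.subset_insert_iff_of_notMem hpQ).1 hQ
        rw [hBi]
        calc _ ≤ |E00 Q| + 1 / ((p:ℝ) - 1) * |E11 Q| := by
              refine (abs_add_le _ _).trans ?_
              rw [abs_mul, abs_of_nonneg hpi]
          _ ≤ 3 ^ Q.card * selB P a b + 1 / ((p:ℝ) - 1) * (3 ^ Q.card * selB P a1 b1) := by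
              gcongr
              · exact c00 Q hQ'
              · exact c11 Q hQ'
          _ = _ := by ring
    · intro Q hQ
      beta_reduce
      split_ifs with hpQ
      · have hQ' : Q.erase p ⊆ P := by
          rw [← Finset.erase_insert hp]; exact Finset.erase_subset_erase p hQ
        intro hne
        have hcase : E01 (Q.erase p) ≠ 0 ∨ E10 (Q.erase p) ≠ 0 ∨ E11 (Q.erase p) ≠ 0 := by
          by_contra! h
          apply hne
          rw [h.1, h.2.1, h.2.2]; ring
        rcases hcase with h | h | h
        · obtain ⟨S, hS, T, hT, haS, hbT, hST⟩ := s01 _ hQ' h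
          refine ⟨S, hS.trans (Finset.subset_insert _ _), insert p T,
            Finset.insert_subset_insert p hT, haS, hbT, ?_⟩
          intro x hx
          by_cases hxp : x = p
          · simp [hxp]
          · have := hST (Finset.mem_erase.2 ⟨hxp, hx⟩)
            simp only [Finset.mem_union, Finset.mem_insert] at this ⊢; tauto
        · obtain ⟨S, hS, T, hT, haS, hbT, hST⟩ := s10 _ hQ' h
          refine ⟨insert p S, Finset.insert_subset_insert p hS, T,
            hT.trans (Finset.subset_insert _ _), haS, hbT, ?_⟩
          intro x hx
          by_cases hxp : x = p
          · simp [hxp]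
          · have := hST (Finset.mem_erase.2 ⟨hxp, hx⟩)
            simp only [Finset.mem_union, Finset.mem_insert] at this ⊢; tauto
        · obtain ⟨S, hS, T, hT, haS, hbT, hST⟩ := s11 _ hQ' h
          refine ⟨insert p S, Finset.insert_subset_insert p hS, insert p T,
            Finset.insert_subset_insert p hT, haS, hbT, ?_⟩
          intro x hx
          by_cases hxp : x = p
          · simp [hxp]
          · have := hST (Finset.mem_erase.2 ⟨hxp, hx⟩)
            simp only [Finset.mem_union, Finset.mem_insert] at this ⊢; tauto
      · have hQ' : Q ⊆ P := (Finset.subset_insert_iff_of_notMem hpQ).1 hQ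
        intro hne
        have hcase : E00 Q ≠ 0 ∨ E11 Q ≠ 0 := by
          by_contra! h
          apply hne
          rw [h.1, h.2]; ring
        rcases hcase with h | h
        · obtain ⟨S, hS, T, hT, haS, hbT, hST⟩ := s00 _ hQ' h
          exact ⟨S, hS.trans (Finset.subset_insert _ _), T, hT.trans (Finset.subset_insert _ _),
            haS, hbT, hST⟩
        · obtain ⟨S, hS, T, hT, haS, hbT, hST⟩ := s11 _ hQ' h
          refine ⟨insert p S, Finset.insert_subset_insert p hS, insert p T,
            Finset.insert_subset_insert p hT, haS, hbT, ?_⟩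
          intro x hx
          have := hST hx
          simp only [Finset.mem_union, Finset.mem_insert] at this ⊢; tauto


lemma sum_mul_bS (A B : Finset ℕ) (hAB : Disjoint A B) (a b : Finset ℕ → ℝ) (n : ℤ) :
    (∑ S ∈ A.powerset, a S * bS S n) * (∑ T ∈ B.powerset, b T * bS T n) =
      ∑ U ∈ (A ∪ B).powerset, a (U ∩ A) * b (U ∩ B) * bS U n := by
  classical
  rw [Finset.sum_mul_sum, ← Finset.sum_product']
  apply Finset.sum_nbij' (fun x => x.1 ∪ x.2) (fun U => (U ∩ A, U ∩ B))
  · intro x hx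
    simp only [Finset.mem_product, Finset.mem_powerset] at hx ⊢
    exact Finset.union_subset_union hx.1 hx.2
  · intro U _
    simp only [Finset.mem_product, Finset.mem_powerset]
    exact ⟨Finset.inter_subset_right, Finset.inter_subset_right⟩
  · rintro ⟨S, T⟩ hx
    simp only [Finset.mem_product, Finset.mem_powerset] at hx
    obtain ⟨h1, h2⟩ := hx
    have := Finset.disjoint_left.1 hAB
    ext x
    · simp only [Finset.mem_inter, Finset.mem_union]
      constructor
      · rintro ⟨h | h, h'⟩
        · exact h
        · exact absurd (h2 h) (this h')
      · intro h; exact ⟨Or.inl h, h1 h⟩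
    · simp only [Finset.mem_inter, Finset.mem_union]
      constructor
      · rintro ⟨h | h, h'⟩
        · exact absurd h' (this (h1 h))
        · exact h
      · intro h; exact ⟨Or.inr h, h2 h⟩
  · intro U hU
    rw [Finset.mem_powerset] at hU
    simp only
    rw [← Finset.inter_union_distrib_left, Finset.inter_eq_left.2 hU]
  · rintro ⟨S, T⟩ hx
    simp only [Finset.mem_product, Finset.mem_powerset] at hx
    obtain ⟨h1, h2⟩ := hx
    have hST : Disjoint S T := Finset.disjoint_of_subset_left h1 (Finset.disjoint_of_subset_right h2 hAB)
    have e1 : (S ∪ T) ∩ A = S := by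
      rw [Finset.union_inter_distrib_right, Finset.inter_eq_left.2 h1,
        Finset.disjoint_iff_inter_eq_empty.1 (Finset.disjoint_of_subset_left h2 hAB.symm),
        Finset.union_empty]
    have e2 : (S ∪ T) ∩ B = T := by
      rw [Finset.union_inter_distrib_right, Finset.inter_eq_left.2 h2,
        Finset.disjoint_iff_inter_eq_empty.1 (Finset.disjoint_of_subset_left h1 hAB),
        Finset.empty_union]
    simp only [e1, e2]
    unfold bS
    rw [Finset.prod_union hST]; ring

lemma mem_primesUpTo {N p : ℕ} : p ∈ primesUpTo N ↔ p ≤ N ∧ p.Prime := by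
  unfold primesUpTo; simp

lemma primesUpTo_mono {a b : ℕ} (h : a ≤ b) : primesUpTo a ⊆ primesUpTo b := by
  intro p; rw [mem_primesUpTo, mem_primesUpTo]; exact fun ⟨h1, h2⟩ => ⟨h1.trans h, h2⟩

/-- main term -/
noncomputable def mainS (w : ℕ) (n : ℤ) : ℝ := ∏ p ∈ primesUpTo w, (1 + bloc p n)

lemma mainS_eq (w : ℕ) (n : ℤ) : mainS w n = ∑ S ∈ (primesUpTo w).powerset, bS S n := by
  unfold mainS bS; rw [Finset.prod_one_add]

lemma mainS_nonneg (w : ℕ) (n : ℤ) : 0 ≤ mainS w n := by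
  apply Finset.prod_nonneg
  intro p hp
  have h : (1:ℝ) < p := by exact_mod_cast (mem_primesUpTo.1 hp).2.one_lt
  unfold bloc
  split_ifs
  · norm_num
  · have : 0 ≤ 1 / ((p:ℝ) - 1) := one_div_nonneg.2 (by linarith)
    linarith

lemma mainS_periodic (w m : ℕ) (hm : primorial w ∣ m) (n k : ℤ) :
    mainS w (n + m * k) = mainS w n := by
  unfold mainS
  apply Finset.prod_congr rfl
  intro p hp
  have hpd : (p:ℤ) ∣ (m:ℤ) * k := by
    apply Dvd.dvd.mul_right
    apply Int.natCast_dvd_natCast.2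
    exact (Finset.dvd_prod_of_mem (fun p => p) hp).trans hm
  unfold bloc
  simp only [Int.dvd_add_left hpd]

/-- truncation weight -/
noncomputable def aR (R : ℕ) (S : Finset ℕ) : ℝ :=
  open Classical in if (∀ p ∈ S, p.Prime) ∧ ∏ p ∈ S, p ≤ R then 1 else 0

lemma aR_nonneg (R : ℕ) (S : Finset ℕ) : 0 ≤ aR R S := by
  unfold aR; split_ifs <;> norm_num

lemma aR_anti (R : ℕ) (S T : Finset ℕ) (h : S ⊆ T) : aR R T ≤ aR R S := by
  unfold aR
  by_cases hT : (∀ p ∈ T, p.Prime) ∧ ∏ p ∈ T, p ≤ R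
  · rw [if_pos hT, if_pos]
    refine ⟨fun p hp => hT.1 p (h hp), le_trans ?_ hT.2⟩
    exact Finset.prod_le_prod_of_subset_of_one_le' h fun p hp _ => (hT.1 p hp).one_le
  · rw [if_neg hT]; split_ifs <;> norm_num

/-- the medium primes -/
def medP (w R : ℕ) : Finset ℕ := primesUpTo R \ primesUpTo w

/-- Selberg weights -/
noncomputable def lamS (w R : ℕ) (n : ℤ) : ℝ := ∑ S ∈ (medP w R).powerset, aR R S * bS S n

/-- normalisation -/
noncomputable def selL (w R : ℕ) : ℝ := selB (medP w R) (aR R) (aR R)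

/-- the sieve majorant -/
noncomputable def nuS (w R : ℕ) (n : ℤ) : ℝ := (selL w R)⁻¹ * (mainS w n * (lamS w R n * lamS w R n))

lemma medP_prime {w R p : ℕ} (h : p ∈ medP w R) : p.Prime ∧ w < p ∧ p ≤ R := by
  unfold medP at h
  rw [Finset.mem_sdiff, mem_primesUpTo, mem_primesUpTo] at h
  refine ⟨h.1.2, ?_, h.1.1⟩
  by_contra h1
  exact h.2 ⟨by omega, h.1.2⟩

lemma selL_ge (w R : ℕ) (hR : 1 ≤ R) : 1 ≤ selL w R := by
  unfold selL selB
  have h := Finset.single_le_sum (f := fun S => aR R S * aR R S * phiInv S)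
    (s := (medP w R).powerset) (fun S hS => mul_nonneg (mul_nonneg (aR_nonneg _ _) (aR_nonneg _ _))
      (phiInv_nonneg S fun p hp => (medP_prime (Finset.mem_powerset.1 hS hp)).1))
    (Finset.empty_mem_powerset _)
  refine le_trans ?_ h
  simp [aR, phiInv, hR]

lemma nuS_nonneg (w R : ℕ) (hR : 1 ≤ R) (n : ℤ) : 0 ≤ nuS w R n := by
  have := selL_ge w R hR
  exact mul_nonneg (inv_nonneg.2 (by linarith)) (mul_nonneg (mainS_nonneg _ _) (mul_self_nonneg _))

lemma phiInv_le_one (S : Finset ℕ) (hS : ∀ p ∈ S, p.Prime) : phiInv S ≤ 1 := by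
  apply Finset.prod_le_one
  · intro p hp
    have : (1:ℝ) ≤ p := by exact_mod_cast (hS p hp).one_le
    exact one_div_nonneg.2 (by linarith)
  · intro p hp
    have : (2:ℝ) ≤ p := by exact_mod_cast (hS p hp).two_le
    rw [div_le_one (by linarith)]; linarith

lemma prod_le_of_nonempty (Q : Finset ℕ) (hQ : Q.Nonempty) (F : ℕ → ℝ) (ε : ℝ) (hε : ε ≤ 1)
    (h0 : ∀ p ∈ Q, 0 ≤ F p) (h1 : ∀ p ∈ Q, F p ≤ ε) : ∏ p ∈ Q, F p ≤ ε := by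
  obtain ⟨q, hq⟩ := hQ
  rw [← Finset.mul_prod_erase Q F hq]
  have : ∏ p ∈ Q.erase q, F p ≤ 1 := Finset.prod_le_one (fun p hp => h0 p (Finset.mem_of_mem_erase hp))
    (fun p hp => (h1 p (Finset.mem_of_mem_erase hp)).trans hε)
  calc _ ≤ F q * 1 := mul_le_mul_of_nonneg_left this (h0 q hq)
    _ ≤ ε := by rw [mul_one]; exact h1 q hq

lemma trigP_main (w : ℕ) : TrigP (primorial w) 1 (mainS w) := by
  apply trigP_of_sum (primorial w) 1 (by norm_num) (primesUpTo w).powerset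
    (fun S hS p hp => (mem_primesUpTo.1 (Finset.mem_powerset.1 hS hp)).2) ?_ (fun _ => 1) ?_
  · intro n; rw [mainS_eq]; simp
  · intro S hS
    exact Finset.prod_le_prod_of_subset_of_one_le' (Finset.mem_powerset.1 hS)
      fun p hp _ => (mem_primesUpTo.1 hp).2.one_le
  · intro S hS
    simpa using phiInv_le_one S (fun p hp => (mem_primesUpTo.1 (Finset.mem_powerset.1 hS hp)).2)

lemma trigP_diff (w w' : ℕ) (hw : w' ≤ w) (hw1 : 1 ≤ w') :
    TrigP (primorial w) (1 / w') (fun n => mainS w n - mainS w' n) := by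
  classical
  have hpr : ∀ S ∈ (primesUpTo w).powerset \ (primesUpTo w').powerset, ∀ p ∈ S, p.Prime := by
    intro S hS p hp
    rw [Finset.mem_sdiff, Finset.mem_powerset] at hS
    exact (mem_primesUpTo.1 (hS.1 hp)).2
  have hw1' : (1:ℝ) ≤ w' := by exact_mod_cast hw1
  apply trigP_of_sum (primorial w) (1 / w') (by positivity)
    ((primesUpTo w).powerset \ (primesUpTo w').powerset) hpr ?_ (fun _ => 1) ?_
  · intro n
    rw [mainS_eq, mainS_eq, sub_eq_iff_eq_add]
    simp only [one_mul]
    rw [Finset.sum_sdiff (Finset.powerset_mono.2 (primesUpTo_mono hw))]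
  · intro S hS
    rw [Finset.mem_sdiff, Finset.mem_powerset] at hS
    exact Finset.prod_le_prod_of_subset_of_one_le' hS.1
      fun p hp _ => (mem_primesUpTo.1 hp).2.one_le
  · intro S hS
    have hSp := hpr S hS
    rw [Finset.mem_sdiff, Finset.mem_powerset, Finset.mem_powerset] at hS
    obtain ⟨q, hq, hq'⟩ := Finset.not_subset.1 hS.2
    have hqw : w' < q := by
      by_contra h
      exact hq' (mem_primesUpTo.2 ⟨by omega, hSp q hq⟩)
    have hqw' : (w':ℝ) + 1 ≤ q := by exact_mod_cast hqw
    have h1 : phiInv S = (1 / ((q:ℝ) - 1)) * phiInv (S.erase q) :=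
      (Finset.mul_prod_erase S (fun p : ℕ => 1 / ((p:ℝ) - 1)) hq).symm
    have h2 := phiInv_le_one (S.erase q) (fun p hp => hSp p (Finset.mem_of_mem_erase hp))
    have h3 := phiInv_nonneg (S.erase q) (fun p hp => hSp p (Finset.mem_of_mem_erase hp))
    rw [abs_one, one_mul, h1]
    calc _ ≤ 1 / (w':ℝ) * 1 := by
          apply mul_le_mul _ h2 h3 (by positivity)
          exact one_div_le_one_div_of_le (by linarith) (by linarith)
      _ = _ := by ring

lemma trigP_h (w R : ℕ) (hw : 3 ≤ w) (hwR : w ≤ R) :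
    TrigP (primorial w * R ^ 2) (3 / w) (fun n => nuS w R n - mainS w n) := by
  classical
  have hmp : ∀ p ∈ medP w R, p.Prime := fun p hp => (medP_prime hp).1
  obtain ⟨E, hE, hE0, hEb, hEs⟩ := sel_prod (medP w R) hmp (aR R) (aR R) (aR_nonneg R)
    (aR_nonneg R) (aR_anti R) (aR_anti R)
  have hL := selL_ge w R (by omega)
  have hL0 : 0 < selL w R := by linarith
  change E ∅ = selL w R at hE0
  have hw3 : (3:ℝ) ≤ w := by exact_mod_cast hw
  set P1 := primesUpTo w with hP1
  set P2 := medP w R with hP2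
  have hdis : Disjoint P1 P2 := Finset.disjoint_sdiff
  set e : Finset ℕ → ℝ := fun Q => if Q = ∅ then 0 else E Q / selL w R with he
  have hprime : ∀ U ∈ (P1 ∪ P2).powerset, ∀ p ∈ U, p.Prime := by
    intro U hU p hp
    rcases Finset.mem_union.1 (Finset.mem_powerset.1 hU hp) with h | h
    · exact (mem_primesUpTo.1 h).2
    · exact hmp p h
  have hform : ∀ n, nuS w R n - mainS w n = ∑ U ∈ (P1 ∪ P2).powerset, e (U ∩ P2) * bS U n := by
    intro n
    have h1 := sum_mul_bS P1 P2 hdis (fun _ => 1) e n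
    simp only [one_mul] at h1
    rw [← h1, ← mainS_eq]
    have h2 : ∑ T ∈ P2.powerset, e T * bS T n = (selL w R)⁻¹ * (lamS w R n * lamS w R n) - 1 := by
      unfold lamS
      rw [hE n, ← Finset.add_sum_erase _ _ (Finset.empty_mem_powerset P2),
        ← Finset.add_sum_erase _ (fun Q => E Q * bS Q n) (Finset.empty_mem_powerset P2), hE0]
      have h3 : ∑ T ∈ P2.powerset.erase ∅, e T * bS T n =
          (selL w R)⁻¹ * ∑ T ∈ P2.powerset.erase ∅, E T * bS T n := by
        rw [Finset.mul_sum]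
        apply Finset.sum_congr rfl
        intro T hT
        simp only [he]
        rw [if_neg (Finset.ne_of_mem_erase hT)]; ring
      rw [h3]
      simp only [he, if_true, bS, Finset.prod_empty]
      field_simp
      ring
    rw [h2]
    unfold nuS
    ring
  apply trigP_of_sum _ (3 / w) (by positivity)
    ((P1 ∪ P2).powerset.filter (fun U => e (U ∩ P2) ≠ 0)) ?_ ?_ (fun U => e (U ∩ P2)) ?_
  · intro n
    rw [hform, Finset.sum_filter_of_ne]
    intro U _ h
    exact left_ne_zero_of_mul h
  · intro U hU
    exact hprime U (Finset.mem_filter.1 hU).1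
  · intro U hU
    rw [Finset.mem_filter] at hU
    obtain ⟨hU, hne⟩ := hU
    have hEne : E (U ∩ P2) ≠ 0 := by
      intro h; apply hne; simp only [he, h]; simp
    obtain ⟨S, hS, T, hT, haS, haT, hST⟩ := hEs _ Finset.inter_subset_right hEne
    have haS' : ∏ p ∈ S, p ≤ R := by
      unfold aR at haS; by_contra h; apply haS; rw [if_neg]; tauto
    have haT' : ∏ p ∈ T, p ≤ R := by
      unfold aR at haT; by_contra h; apply haT; rw [if_neg]; tauto
    have hUe : U = (U ∩ P1) ∪ (U ∩ P2) := by
      rw [← Finset.inter_union_distrib_left, Finset.inter_eq_left.2 (Finset.mem_powerset.1 hU)]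
    rw [hUe, Finset.prod_union (Finset.disjoint_of_subset_left Finset.inter_subset_right
      (Finset.disjoint_of_subset_right Finset.inter_subset_right hdis))]
    apply Nat.mul_le_mul
    · exact Finset.prod_le_prod_of_subset_of_one_le' Finset.inter_subset_right
        fun p hp _ => (mem_primesUpTo.1 hp).2.one_le
    · calc ∏ p ∈ U ∩ P2, p ≤ ∏ p ∈ S ∪ T, p :=
            Finset.prod_le_prod_of_subset_of_one_le' hST fun p hp _ =>
              (hmp p ((Finset.union_subset hS hT) hp)).one_le
        _ ≤ (∏ p ∈ S ∪ T, p) * (∏ p ∈ S ∩ T, p) := by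
            apply Nat.le_mul_of_pos_right
            exact Finset.prod_pos fun p hp => (hmp p (hS (Finset.mem_inter.1 hp).1)).pos
        _ = (∏ p ∈ S, p) * (∏ p ∈ T, p) := Finset.prod_union_inter
        _ ≤ R * R := Nat.mul_le_mul haS' haT'
        _ = R ^ 2 := by ring
  · intro U hU
    rw [Finset.mem_filter] at hU
    obtain ⟨hU, hne⟩ := hU
    have hQ : U ∩ P2 ≠ ∅ := by
      intro h; apply hne; simp only [he, h]; simp
    have hUe : U = (U ∩ P1) ∪ (U ∩ P2) := by
      rw [← Finset.inter_union_distrib_left, Finset.inter_eq_left.2 (Finset.mem_powerset.1 hU)]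
    have hphi : phiInv U = phiInv (U ∩ P1) * phiInv (U ∩ P2) := by
      conv_lhs => rw [hUe]
      exact Finset.prod_union (Finset.disjoint_of_subset_left Finset.inter_subset_right
        (Finset.disjoint_of_subset_right Finset.inter_subset_right hdis))
    have hp1 := phiInv_le_one (U ∩ P1) fun p hp => hprime U hU p (Finset.mem_inter.1 hp).1
    have hn1 := phiInv_nonneg (U ∩ P1) fun p hp => hprime U hU p (Finset.mem_inter.1 hp).1
    have hn2 := phiInv_nonneg (U ∩ P2) fun p hp => hprime U hU p (Finset.mem_inter.1 hp).1
    have hb := hEb (U ∩ P2) Finset.inter_subset_right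
    have hab : |e (U ∩ P2)| ≤ 3 ^ (U ∩ P2).card := by
      simp only [he]
      rw [if_neg hQ, abs_div, abs_of_pos hL0, div_le_iff₀ hL0]
      exact hb
    have hprod : 3 ^ (U ∩ P2).card * phiInv (U ∩ P2) ≤ 3 / w := by
      unfold phiInv
      rw [← Finset.prod_const, ← Finset.prod_mul_distrib]
      apply prod_le_of_nonempty _ (Finset.nonempty_iff_ne_empty.2 hQ)
      · rw [div_le_one (by linarith)]; exact hw3
      · intro p hp
        have : w < p := (medP_prime (Finset.mem_inter.1 hp).2).2.1
        have : (w:ℝ) + 1 ≤ p := by exact_mod_cast this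
        exact mul_nonneg (by norm_num) (one_div_nonneg.2 (by linarith))
      · intro p hp
        have : w < p := (medP_prime (Finset.mem_inter.1 hp).2).2.1
        have : (w:ℝ) + 1 ≤ p := by exact_mod_cast this
        rw [mul_one_div]
        exact div_le_div_of_nonneg_left (by norm_num) (by linarith) (by linarith)
    rw [hphi]
    calc _ ≤ 3 ^ (U ∩ P2).card * (1 * phiInv (U ∩ P2)) := by
          apply mul_le_mul hab _ (mul_nonneg hn1 hn2) (by positivity)
          exact mul_le_mul_of_nonneg_right hp1 hn2
      _ ≤ _ := by rw [one_mul]; exact hprod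


lemma bloc_prime (n R : ℕ) (hn : n.Prime) (hR : R < n) (S : Finset ℕ) (hS : S ⊆ primesUpTo R) :
    bS S n = phiInv S := by
  apply Finset.prod_congr rfl
  intro p hp
  have h := mem_primesUpTo.1 (hS hp)
  unfold bloc
  rw [if_neg]
  intro hd
  have := (Nat.prime_dvd_prime_iff_eq h.2 hn).1 (Int.natCast_dvd_natCast.1 hd)
  omega

lemma sqfree_sum (R : ℕ) (hR : 1 ≤ R) :
    Real.log R ≤ 2 * ∑ q ∈ (Finset.Icc 1 R).filter Squarefree, (1 / (q:ℝ)) := by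
  have h1 : Real.log R ≤ ∑ m ∈ Finset.Icc 1 R, (1 / (m:ℝ)) := by
    have h := log_add_one_le_harmonic R
    rw [harmonic_eq_sum_Icc] at h
    push_cast at h
    simp only [one_div]
    refine le_trans (Real.log_le_log (by exact_mod_cast hR) (by linarith)) h
  have h2 : ∑ m ∈ Finset.Icc 1 R, (1 / (m:ℝ)) ≤
      ∑ x ∈ ((Finset.Icc 1 R) ×ˢ (Finset.Icc 1 R).filter Squarefree),
        (((x.1:ℝ) ^ 2)⁻¹ * (1 / (x.2:ℝ))) := by
    have hex : ∀ m : ℕ, ∃ x : ℕ × ℕ, x.1 ^ 2 * x.2 = m ∧ Squarefree x.2 := by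
      intro m
      obtain ⟨a, b, h, hs⟩ := Nat.sq_mul_squarefree m
      exact ⟨(b, a), h, hs⟩
    choose φ hφ hφs using hex
    have hinj : Set.InjOn φ (Finset.Icc 1 R) := by
      intro a _ b _ h
      rw [← hφ a, ← hφ b, h]
    calc _ = ∑ m ∈ Finset.Icc 1 R, ((((φ m).1:ℝ) ^ 2)⁻¹ * (1 / ((φ m).2:ℝ))) := by
          apply Finset.sum_congr rfl
          intro m _
          conv_lhs => rw [← hφ m]
          push_cast
          rw [one_div, one_div, mul_inv]
      _ = ∑ x ∈ (Finset.Icc 1 R).image φ, (((x.1:ℝ) ^ 2)⁻¹ * (1 / (x.2:ℝ))) := by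
          rw [Finset.sum_image hinj]
      _ ≤ _ := by
          apply Finset.sum_le_sum_of_subset_of_nonneg
          · intro x hx
            obtain ⟨m, hm, rfl⟩ := Finset.mem_image.1 hx
            rw [Finset.mem_Icc] at hm
            have h := hφ m
            have hb1 : 1 ≤ (φ m).1 := by
              by_contra h0
              have : (φ m).1 = 0 := by omega
              rw [this] at h; simp at h; omega
            have hb2 : 1 ≤ (φ m).2 := by
              by_contra h0
              have : (φ m).2 = 0 := by omega
              rw [this] at h; simp at h; omega
            rw [Finset.mem_product, Finset.mem_filter, Finset.mem_Icc, Finset.mem_Icc]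
            have hsq : (φ m).1 ≤ (φ m).1 ^ 2 := by nlinarith
            refine ⟨⟨hb1, ?_⟩, ⟨hb2, ?_⟩, hφs m⟩
            · calc _ ≤ (φ m).1 ^ 2 * 1 := by omega
                _ ≤ (φ m).1 ^ 2 * (φ m).2 := Nat.mul_le_mul_left _ hb2
                _ ≤ R := by omega
            · calc _ = 1 * (φ m).2 := by omega
                _ ≤ (φ m).1 ^ 2 * (φ m).2 := Nat.mul_le_mul_right _ (by omega)
                _ ≤ R := by omega
          · intro x _ _; positivity
  have h3 : ∑ d ∈ Finset.Icc 1 R, ((d:ℝ) ^ 2)⁻¹ ≤ 2 := by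
    have h := sum_Ioo_inv_sq_le (α := ℝ) 0 (R + 1)
    have he : Finset.Icc 1 R = Finset.Ioo 0 (R + 1) := by ext x; simp; omega
    rw [he]
    simpa using h
  rw [Finset.sum_product] at h2
  simp only [← Finset.mul_sum, ← Finset.sum_mul] at h2
  refine h1.trans (h2.trans ?_)
  apply mul_le_mul_of_nonneg_right h3
  apply Finset.sum_nonneg; intro x _; positivity

lemma nuS_ge (w R n : ℕ) (hwR : w ≤ R) (hR1 : 1 ≤ R) (hn : n.Prime) (hR : R < n) :
    Real.log R / 2 ≤ nuS w R n := by
  classical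
  have hmed : medP w R ⊆ primesUpTo R := Finset.sdiff_subset
  have hlam : lamS w R n = selL w R := by
    unfold lamS selL selB
    apply Finset.sum_congr rfl
    intro S hS
    rw [bloc_prime n R hn hR S ((Finset.mem_powerset.1 hS).trans hmed)]
    congr 1
    unfold aR; split_ifs <;> norm_num
  have hL := selL_ge w R hR1
  have h1 : nuS w R n = mainS w n * lamS w R n := by
    unfold nuS; rw [hlam]; field_simp
  have hdis : Disjoint (primesUpTo w) (medP w R) := Finset.disjoint_sdiff
  have hun : primesUpTo w ∪ medP w R = primesUpTo R :=
    Finset.union_sdiff_of_subset (primesUpTo_mono hwR)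
  have h2 := sum_mul_bS (primesUpTo w) (medP w R) hdis (fun _ => 1) (aR R) n
  simp only [one_mul] at h2
  rw [← mainS_eq, hun] at h2
  change mainS w n * lamS w R n = _ at h2
  rw [h1, h2]
  have hpr : ∀ U ∈ (primesUpTo R).powerset, ∀ p ∈ U, p.Prime := fun U hU p hp =>
    (mem_primesUpTo.1 (Finset.mem_powerset.1 hU hp)).2
  have hinj : Set.InjOn Nat.primeFactors ((Finset.Icc 1 R).filter Squarefree) := by
    intro a ha b hb h
    have ha := (Finset.mem_filter.1 ha).2
    have hb := (Finset.mem_filter.1 hb).2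
    rw [← Nat.prod_primeFactors_of_squarefree ha, ← Nat.prod_primeFactors_of_squarefree hb, h]
  have h3 := sqfree_sum R hR1
  have h4 : ∑ q ∈ (Finset.Icc 1 R).filter Squarefree, (1 / (q:ℝ)) ≤
      ∑ U ∈ (primesUpTo R).powerset, aR R (U ∩ medP w R) * bS U n := by
    calc _ ≤ ∑ q ∈ (Finset.Icc 1 R).filter Squarefree,
            aR R (q.primeFactors ∩ medP w R) * bS q.primeFactors n := by
          apply Finset.sum_le_sum
          intro q hq
          rw [Finset.mem_filter, Finset.mem_Icc] at hq
          have hqs : q.primeFactors ⊆ primesUpTo R := by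
            intro p hp
            rw [mem_primesUpTo]
            have hp' := Nat.mem_primeFactors.1 hp
            exact ⟨(Nat.le_of_dvd (by omega) hp'.2.1).trans hq.1.2, hp'.1⟩
          have hpq := Nat.prod_primeFactors_of_squarefree hq.2
          have ha : aR R (q.primeFactors ∩ medP w R) = 1 := by
            apply le_antisymm
            · unfold aR; split_ifs <;> norm_num
            · refine le_trans ?_ (aR_anti R _ _ (Finset.inter_subset_left (s₂ := medP w R)))
              unfold aR
              rw [if_pos]
              rw [hpq]
              exact ⟨fun p hp => (Nat.mem_primeFactors.1 hp).1, hq.1.2⟩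
          rw [ha, one_mul, bloc_prime n R hn hR _ hqs]
          conv_lhs => rw [← hpq]
          unfold phiInv
          push_cast
          rw [one_div, ← Finset.prod_inv_distrib]
          apply Finset.prod_le_prod
          · intro p _; positivity
          · intro p hp
            have : (2:ℝ) ≤ p := by exact_mod_cast (Nat.mem_primeFactors.1 hp).1.two_le
            rw [one_div]
            apply inv_anti₀ (by linarith) (by linarith)
      _ = ∑ U ∈ ((Finset.Icc 1 R).filter Squarefree).image Nat.primeFactors,
            aR R (U ∩ medP w R) * bS U n := by rw [Finset.sum_image hinj]
      _ ≤ _ := by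
          apply Finset.sum_le_sum_of_subset_of_nonneg
          · intro U hU
            obtain ⟨q, hq, rfl⟩ := Finset.mem_image.1 hU
            rw [Finset.mem_filter, Finset.mem_Icc] at hq
            rw [Finset.mem_powerset]
            intro p hp
            rw [mem_primesUpTo]
            have hp' := Nat.mem_primeFactors.1 hp
            exact ⟨(Nat.le_of_dvd (by omega) hp'.2.1).trans hq.1.2, hp'.1⟩
          · intro U hU _
            rw [bloc_prime n R hn hR _ (Finset.mem_powerset.1 hU)]
            exact mul_nonneg (aR_nonneg _ _) (phiInv_nonneg U (hpr U hU))
  linarith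


lemma sum_range_mul' {α : Type*} [AddCommMonoid α] (I m : ℕ) (f : ℕ → α) :
    ∑ i ∈ Finset.range (I * m), f i = ∑ b ∈ Finset.range I, ∑ i ∈ Finset.range m, f (b * m + i) := by
  induction I with
  | zero => simp
  | succ I ih => rw [Nat.succ_mul, Finset.sum_range_add, ih, Finset.sum_range_succ]

lemma opA_block (m I I' : ℕ) (hm : 1 ≤ m) (hI' : 1 ≤ I') (hII : I' ≤ I) (g F : ℤ → ℝ)
    (hg : ∀ n k : ℤ, g (n + m * k) = g n) (x : ℤ) :
    |opA (I * m) (I' * m) g F x| ≤ boxAvg I m (fun y => |opA m m g F y|) x := by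
  have hm0 : (0:ℝ) < m := by exact_mod_cast hm
  have hI0 : (0:ℝ) < I := by exact_mod_cast hI'.trans hII
  have hI'0 : (0:ℝ) < I' := by exact_mod_cast hI'
  have h1 : opA (I * m) (I' * m) g F x = (1 / ((I:ℝ) * I')) * ∑ b' ∈ Finset.range I',
      ∑ b ∈ Finset.range I, opA m m g F (x + m * ((b:ℤ) - b')) := by
    unfold opA
    rw [sum_range_mul']
    have h2 : ∀ b ∈ Finset.range I, ∑ i ∈ Finset.range m, ∑ j ∈ Finset.range (I' * m),
        g (((b * m + i : ℕ):ℤ) - j) * F (x + (((b * m + i : ℕ):ℤ) - j)) =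
        ∑ b' ∈ Finset.range I', ∑ i ∈ Finset.range m, ∑ j ∈ Finset.range m,
          g ((i:ℤ) - j) * F (x + m * ((b:ℤ) - b') + ((i:ℤ) - j)) := by
      intro b _
      rw [Finset.sum_comm (s := Finset.range I')]
      apply Finset.sum_congr rfl
      intro i _
      rw [sum_range_mul']
      apply Finset.sum_congr rfl
      intro b' _
      apply Finset.sum_congr rfl
      intro j _
      have e1 : ((b * m + i : ℕ):ℤ) - (b' * m + j : ℕ) = ((i:ℤ) - j) + m * ((b:ℤ) - b') := by
        push_cast; ring
      rw [e1, hg]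
      congr 2; ring
    rw [Finset.sum_congr rfl h2, Finset.sum_comm]
    simp only [← Finset.mul_sum]
    rw [← mul_assoc]
    congr 1
    push_cast
    field_simp
  rw [h1, abs_mul, abs_of_nonneg (by positivity)]
  unfold boxAvg
  have h3 : |∑ b' ∈ Finset.range I', ∑ b ∈ Finset.range I, opA m m g F (x + m * ((b:ℤ) - b'))| ≤
      ∑ b' ∈ Finset.range I', ∑ n ∈ Finset.Ioo (-(I:ℤ)) I, |opA m m g F (x + m * n)| := by
    refine (Finset.abs_sum_le_sum_abs _ _).trans (Finset.sum_le_sum ?_)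
    intro b' hb'
    rw [Finset.mem_range] at hb'
    refine (Finset.abs_sum_le_sum_abs _ _).trans ?_
    have hinj : Set.InjOn (fun b : ℕ => (b:ℤ) - b') (Finset.range I) := by
      intro a _ b _ h
      simp only at h; omega
    rw [← Finset.sum_image (f := fun n : ℤ => |opA m m g F (x + m * n)|) hinj]
    apply Finset.sum_le_sum_of_subset_of_nonneg
    · intro n hn
      obtain ⟨b, hb, rfl⟩ := Finset.mem_image.1 hn
      rw [Finset.mem_range] at hb
      rw [Finset.mem_Ioo]; omega
    · intro _ _ _; exact abs_nonneg _
  rw [Finset.sum_const, Finset.card_range, nsmul_eq_mul] at h3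
  calc _ ≤ 1 / ((I:ℝ) * I') * (I' * ∑ n ∈ Finset.Ioo (-(I:ℤ)) I, |opA m m g F (x + m * n)|) := by
        gcongr
    _ = _ := by field_simp

lemma opA_dom (N M L : ℕ) (hM : 1 ≤ M) (hL : N + M ≤ L) (ν F : ℤ → ℝ) (hν : ∀ n, 0 ≤ ν n)
    (hF : ∀ n, 0 ≤ F n) (S : Finset ℕ) (hS : ∀ p ∈ S, p ≤ N) (c : ℝ)
    (hc : ∀ p ∈ S, c ≤ ν p) (x : ℤ) :
    c * ∑ p ∈ S, F (x + p) ≤ L * opA L M ν F x := by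
  have hM0 : (0:ℝ) < M := by exact_mod_cast hM
  have hL0 : (0:ℝ) < L := by exact_mod_cast (by omega : 0 < L)
  have h1 : ∑ j ∈ Finset.range M, c * ∑ p ∈ S, F (x + p) ≤
      ∑ j ∈ Finset.range M, ∑ i ∈ Finset.range L, ν ((i:ℤ) - j) * F (x + ((i:ℤ) - j)) := by
    apply Finset.sum_le_sum
    intro j hj
    rw [Finset.mem_range] at hj
    have hinj : Set.InjOn (fun p : ℕ => p + j) S := by
      intro a _ b _ h; simp only at h; omega
    calc _ ≤ ∑ p ∈ S, ν p * F (x + p) := by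
          rw [Finset.mul_sum]
          apply Finset.sum_le_sum
          intro p hp
          exact mul_le_mul_of_nonneg_right (hc p hp) (hF _)
      _ = ∑ i ∈ S.image (fun p => p + j), ν ((i:ℤ) - j) * F (x + ((i:ℤ) - j)) := by
          rw [Finset.sum_image hinj]
          apply Finset.sum_congr rfl
          intro p _
          push_cast
          simp
      _ ≤ _ := by
          apply Finset.sum_le_sum_of_subset_of_nonneg
          · intro i hi
            obtain ⟨p, hp, rfl⟩ := Finset.mem_image.1 hi
            have := hS p hp
            rw [Finset.mem_range]; omega
          · intro _ _ _; exact mul_nonneg (hν _) (hF _)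
  rw [Finset.sum_const, Finset.card_range, nsmul_eq_mul, Finset.sum_comm] at h1
  unfold opA
  have h2 : (L:ℝ) * (1 / (L * M) * ∑ i ∈ Finset.range L, ∑ j ∈ Finset.range M,
      ν ((i:ℤ) - j) * F (x + ((i:ℤ) - j))) = (∑ i ∈ Finset.range L, ∑ j ∈ Finset.range M,
      ν ((i:ℤ) - j) * F (x + ((i:ℤ) - j))) / M := by field_simp
  rw [h2, le_div_iff₀ hM0]
  linarith

lemma opA_add (N M : ℕ) (g h F : ℤ → ℝ) (x : ℤ) :
    opA N M (fun n => g n + h n) F x = opA N M g F x + opA N M h F x := by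
  unfold opA
  rw [← mul_add, ← Finset.sum_add_distrib]
  congr 1
  apply Finset.sum_congr rfl; intro i _
  rw [← Finset.sum_add_distrib]
  apply Finset.sum_congr rfl; intro j _
  ring

lemma opA_sum {ι : Type*} (s : Finset ι) (N M : ℕ) (g : ι → ℤ → ℝ) (F : ℤ → ℝ) (x : ℤ) :
    opA N M (fun n => ∑ l ∈ s, g l n) F x = ∑ l ∈ s, opA N M (g l) F x := by
  classical
  induction s using Finset.induction with
  | empty => simp [opA]
  | insert a s ha ih =>
    simp only [Finset.sum_insert ha]
    rw [opA_add, ih]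

lemma sqn_mono {f g : ℤ → ℝ} (h : ∀ x, |f x| ≤ |g x|) : sqn f ≤ sqn g := by
  apply ENNReal.tsum_le_tsum
  intro x
  exact ENNReal.ofReal_le_ofReal (sq_le_sq.2 (h x))

lemma sqn_abs (f : ℤ → ℝ) : sqn (fun x => |f x|) = sqn f := by
  unfold sqn; simp only [sq_abs]

lemma sqn_avg (S : Finset ℕ) (c : ℕ → ℝ) (hc : ∀ p ∈ S, 0 ≤ c p) (A : ℝ) (hA : ∑ p ∈ S, c p ≤ A)
    (f : ℤ → ℝ) :
    sqn (fun x => ∑ p ∈ S, c p * f (x + p)) ≤ ENNReal.ofReal (A ^ 2) * sqn f := by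
  have hs0 : 0 ≤ ∑ p ∈ S, c p := Finset.sum_nonneg hc
  have hA0 : 0 ≤ A := hs0.trans hA
  have h1 : ∀ x : ℤ, ENNReal.ofReal ((∑ p ∈ S, c p * f (x + p)) ^ 2) ≤
      ENNReal.ofReal A * ∑ p ∈ S, ENNReal.ofReal (c p) * ENNReal.ofReal (f (x + p) ^ 2) := by
    intro x
    have h2 : (∑ p ∈ S, c p * f (x + p)) ^ 2 ≤ A * ∑ p ∈ S, c p * f (x + p) ^ 2 := by
      have h3 := Finset.sum_sq_le_sum_mul_sum_of_sq_le_mul S (r := fun p => c p * f (x + p))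
        (f := c) (g := fun p => c p * f (x + p) ^ 2) hc
        (fun p hp => mul_nonneg (hc p hp) (sq_nonneg _)) (fun p _ => le_of_eq (by ring))
      refine h3.trans (mul_le_mul_of_nonneg_right hA ?_)
      exact Finset.sum_nonneg fun p hp => mul_nonneg (hc p hp) (sq_nonneg _)
    refine (ENNReal.ofReal_le_ofReal h2).trans ?_
    rw [ENNReal.ofReal_mul hA0, ENNReal.ofReal_sum_of_nonneg
      (fun p hp => mul_nonneg (hc p hp) (sq_nonneg _))]
    gcongr with p hp
    rw [ENNReal.ofReal_mul (hc p hp)]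
  calc sqn (fun x => ∑ p ∈ S, c p * f (x + p)) ≤
      ∑' x : ℤ, ENNReal.ofReal A * ∑ p ∈ S, ENNReal.ofReal (c p) * ENNReal.ofReal (f (x + p) ^ 2) :=
        ENNReal.tsum_le_tsum h1
    _ = ENNReal.ofReal A * ∑ p ∈ S, ENNReal.ofReal (c p) * sqn f := by
        rw [ENNReal.tsum_mul_left, Summable.tsum_finsetSum (fun _ _ => ENNReal.summable)]
        congr 1
        apply Finset.sum_congr rfl
        intro p _
        rw [ENNReal.tsum_mul_left]
        congr 1
        exact tsum_shift (fun y => ENNReal.ofReal (f y ^ 2)) p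
    _ = ENNReal.ofReal A * (ENNReal.ofReal (∑ p ∈ S, c p) * sqn f) := by
        rw [← Finset.sum_mul, ENNReal.ofReal_sum_of_nonneg hc]
    _ ≤ ENNReal.ofReal A * (ENNReal.ofReal A * sqn f) := by gcongr
    _ = _ := by rw [← mul_assoc, ← ENNReal.ofReal_mul hA0, pow_two]

/-- a bound for a varying choice in a sequence -/
lemma sqn_choice (u : ℕ → ℤ → ℝ) (κ : ℤ → ℕ) : sqn (fun x => u (κ x) x) ≤ ∑' k, sqn (u k) := by
  unfold sqn
  rw [ENNReal.tsum_comm]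
  apply ENNReal.tsum_le_tsum
  intro x
  exact ENNReal.le_tsum (f := fun k => ENNReal.ofReal (u k x ^ 2)) (κ x)

lemma sum_sq_dyadic (t : ℕ) (u : ℕ → ℝ) :
    (∑ j ∈ Finset.range t, u j) ^ 2 ≤ 2 * ∑ j ∈ Finset.range t, 2 ^ j * u j ^ 2 := by
  have h3 := Finset.sum_sq_le_sum_mul_sum_of_sq_le_mul (Finset.range t) (r := u)
        (f := fun j => (1 / 2 : ℝ) ^ j) (g := fun j => 2 ^ j * u j ^ 2) (fun _ _ => by positivity)
        (fun _ _ => by positivity) (fun j _ => by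
          apply le_of_eq
          rw [← mul_assoc, ← mul_pow]; norm_num)
  refine h3.trans (mul_le_mul_of_nonneg_right ?_ (Finset.sum_nonneg fun _ _ => by positivity))
  rw [geom_sum_eq (by norm_num)]
  have : (0:ℝ) ≤ (1/2) ^ t := by positivity
  rw [div_le_iff_of_neg (by norm_num)]
  linarith

lemma sqn_dyadic (t : ℤ → ℕ) (u : ℕ → ℤ → ℝ) (B : ENNReal)
    (hu : ∀ j, sqn (u j) ≤ ENNReal.ofReal ((1 / 4) ^ j) * B) :
    sqn (fun x => ∑ j ∈ Finset.range (t x), u j x) ≤ 4 * B := by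
  have h1 : ∀ x : ℤ, ENNReal.ofReal ((∑ j ∈ Finset.range (t x), u j x) ^ 2) ≤
      2 * ∑' j : ℕ, ENNReal.ofReal (2 ^ j) * ENNReal.ofReal (u j x ^ 2) := by
    intro x
    refine (ENNReal.ofReal_le_ofReal (sum_sq_dyadic (t x) fun j => u j x)).trans ?_
    rw [ENNReal.ofReal_mul (by norm_num), ENNReal.ofReal_sum_of_nonneg (fun _ _ => by positivity)]
    gcongr
    · simp
    · refine le_trans (le_of_eq ?_) (ENNReal.sum_le_tsum (Finset.range (t x)))
      apply Finset.sum_congr rfl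
      intro j _
      rw [ENNReal.ofReal_mul (by positivity)]
  calc _ ≤ ∑' x : ℤ, 2 * ∑' j : ℕ, ENNReal.ofReal (2 ^ j) * ENNReal.ofReal (u j x ^ 2) :=
        ENNReal.tsum_le_tsum h1
    _ = 2 * ∑' j : ℕ, ENNReal.ofReal (2 ^ j) * sqn (u j) := by
        rw [ENNReal.tsum_mul_left, ENNReal.tsum_comm]
        simp only [ENNReal.tsum_mul_left]; rfl
    _ ≤ 2 * ∑' j : ℕ, ENNReal.ofReal ((1/2) ^ j) * B := by
        refine mul_le_mul_right (ENNReal.tsum_le_tsum fun j => ?_) _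
        refine (mul_le_mul_right (hu j) _).trans (le_of_eq ?_)
        rw [← mul_assoc, ← ENNReal.ofReal_mul (by positivity), ← mul_pow]
        norm_num
    _ = 2 * (ENNReal.ofReal (∑' j : ℕ, (1/2) ^ j) * B) := by
        rw [ENNReal.tsum_mul_right, ENNReal.ofReal_tsum_of_nonneg (fun _ => by positivity)
          summable_geometric_two]
    _ = 4 * B := by
        rw [tsum_geometric_two, ← mul_assoc]; congr 1
        rw [ENNReal.ofReal_ofNat]; norm_num


lemma theta_eq (N : ℕ) : theta N = Chebyshev.theta N := by
  rw [Chebyshev.theta_eq_sum_primesLE_log]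
  rfl

lemma theta_le (N : ℕ) : theta N ≤ 2 * N := by
  rw [theta_eq]
  refine (Chebyshev.theta_le_log4_mul_x (Nat.cast_nonneg N)).trans ?_
  apply mul_le_mul_of_nonneg_right _ (Nat.cast_nonneg N)
  have : Real.log 4 = 2 * Real.log 2 := by
    rw [show (4:ℝ) = 2 ^ 2 by norm_num, Real.log_pow]; norm_num
  rw [this]; linarith [Real.log_two_lt_d9]

lemma theta_ge_quarter (k : ℕ) (hk : 128 ≤ k) : ((2 ^ k : ℕ) : ℝ) / 4 ≤ theta (2 ^ k) := by
  rw [theta_eq]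
  refine le_trans ?_ (Chebyshev.theta_ge (2 ^ k))
  have hl1 := Real.log_two_gt_d9
  have hl2 := Real.log_two_lt_d9
  set N : ℝ := ((2 ^ k : ℕ) : ℝ) with hN
  have hNe : N = 2 ^ k := by rw [hN]; push_cast; rfl
  have hlog : Real.log N = k * Real.log 2 := by rw [hNe, Real.log_pow]
  have hN1 : 1 ≤ N := by rw [hNe]; exact one_le_pow₀ (by norm_num)
  have hlog1 : Real.log (N + 1) ≤ (k + 1) * Real.log 2 := by
    have : Real.log (N + 1) ≤ Real.log (2 ^ (k+1)) := by
      apply Real.log_le_log (by linarith)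
      rw [pow_succ, ← hNe]; linarith
    rwa [Real.log_pow, Nat.cast_succ] at this
  -- k ≤ √N / 64
  have hk4 : ∀ k : ℕ, 128 ≤ k → (64 * k) ^ 2 ≤ 2 ^ k := by
    intro k hk
    induction k, hk using Nat.le_induction with
    | base => norm_num
    | succ n hn ih => rw [pow_succ 2 n]; nlinarith
  have hs0 : 0 ≤ √N := Real.sqrt_nonneg _
  have hss : √N * √N = N := Real.mul_self_sqrt (by linarith)
  have hks : 64 * (k:ℝ) ≤ √N := by
    apply Real.le_sqrt_of_sq_le
    rw [hNe]; exact_mod_cast hk4 k hk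
  have hk' : (128:ℝ) ≤ k := by exact_mod_cast hk
  rw [hlog]
  have h1 : (k:ℝ) * Real.log 2 ≤ k := by nlinarith
  have h2 : 2 * √N * (k * Real.log 2) ≤ 2 * √N * (√N / 64) := by
    apply mul_le_mul_of_nonneg_left _ (by positivity); linarith
  have h3 : √N ≤ N / 64 := by nlinarith
  have h4 : N * 0.6931471803 ≤ N * Real.log 2 := by
    apply mul_le_mul_of_nonneg_left hl1.le (by linarith)
  have h5 : 2 * √N * (√N / 64) = N / 32 := by linear_combination hss / 32
  have h6 : (k + 1 : ℝ) * Real.log 2 ≤ N / 32 := by nlinarith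
  linarith

/-- scale -/
def tk (k : ℕ) : ℕ := Nat.log 2 k - 5
/-- sieve level -/
def Rt (t : ℕ) : ℕ := 2 ^ 2 ^ t
/-- modulus -/
def Mt (t : ℕ) : ℕ := primorial (2 ^ t) * 2 ^ (16 * 2 ^ t)
/-- number of blocks -/
def Jk (k : ℕ) : ℕ := 2 ^ k / Mt (tk k) + 2

lemma tk_spec (k : ℕ) (hk : 128 ≤ k) : 2 ≤ tk k ∧ 32 * 2 ^ tk k ≤ k ∧ k < 64 * 2 ^ tk k := by
  unfold tk
  have h0 : 7 ≤ Nat.log 2 k := by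
    apply Nat.le_log_of_pow_le (by norm_num); omega
  obtain ⟨s, hs⟩ := Nat.exists_eq_add_of_le h0
  have h1 : 2 ^ Nat.log 2 k ≤ k := Nat.pow_log_le_self 2 (by omega)
  have h2 : k < 2 ^ (Nat.log 2 k + 1) := Nat.lt_pow_succ_log_self (by norm_num) k
  rw [hs] at h1 h2 ⊢
  have e1 : 7 + s - 5 = s + 2 := by omega
  rw [e1]
  refine ⟨by omega, ?_, ?_⟩
  · calc _ = 2 ^ (7 + s) := by ring
      _ ≤ k := h1
  · calc k < 2 ^ (7 + s + 1) := h2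
      _ = _ := by ring

lemma Mt_pos (t : ℕ) : 1 ≤ Mt t := Nat.mul_pos (primorial_pos _) (by positivity)

lemma primorial_pow_le (t : ℕ) : primorial (2 ^ t) ≤ 2 ^ (2 * 2 ^ t) := by
  refine (primorial_le_four_pow _).trans ?_
  rw [pow_mul]; norm_num

lemma Mt_le (k : ℕ) (hk : 128 ≤ k) : Mt (tk k) ≤ 2 ^ k := by
  have h := tk_spec k hk
  calc Mt (tk k) ≤ 2 ^ (2 * 2 ^ tk k) * 2 ^ (16 * 2 ^ tk k) :=
        Nat.mul_le_mul_right _ (primorial_pow_le _)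
    _ = 2 ^ (18 * 2 ^ tk k) := by rw [← pow_add]; congr 1; ring
    _ ≤ 2 ^ k := Nat.pow_le_pow_right (by norm_num) (by omega)

lemma Mt_dvd (j t : ℕ) (h : j ≤ t) : Mt j ∣ Mt t := by
  have h2 : 2 ^ j ≤ 2 ^ t := Nat.pow_le_pow_right (by norm_num) h
  exact mul_dvd_mul (primorial_dvd_primorial h2) (pow_dvd_pow 2 (Nat.mul_le_mul_left 16 h2))

lemma W4_le (t : ℕ) : (primorial (2 ^ t)) ^ 4 ≤ Mt t := by
  calc _ ≤ (2 ^ (2 * 2 ^ t)) ^ 4 := Nat.pow_le_pow_left (primorial_pow_le t) 4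
    _ = 2 ^ (8 * 2 ^ t) := by rw [← pow_mul]; congr 1; ring
    _ ≤ 1 * 2 ^ (16 * 2 ^ t) := by
        rw [one_mul]; exact Nat.pow_le_pow_right (by norm_num) (by omega)
    _ ≤ _ := Nat.mul_le_mul_right _ (primorial_pos _)

lemma D4_le (t : ℕ) : (primorial (2 ^ t) * Rt t ^ 2) ^ 4 ≤ Mt t := by
  calc _ ≤ (2 ^ (2 * 2 ^ t) * Rt t ^ 2) ^ 4 :=
        Nat.pow_le_pow_left (Nat.mul_le_mul_right _ (primorial_pow_le t)) 4
    _ = 2 ^ (16 * 2 ^ t) := by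
        unfold Rt; rw [← pow_mul, ← pow_add, ← pow_mul]; congr 1; ring
    _ = 1 * 2 ^ (16 * 2 ^ t) := by rw [one_mul]
    _ ≤ _ := Nat.mul_le_mul_right _ (primorial_pos _)

lemma Jk_ge (k : ℕ) : 2 ^ k + Mt (tk k) ≤ Jk k * Mt (tk k) := by
  unfold Jk
  have h1 := Nat.div_add_mod (2 ^ k) (Mt (tk k))
  have h2 := Nat.mod_lt (2 ^ k) (Mt_pos (tk k))
  have h3 : (2 ^ k / Mt (tk k) + 2) * Mt (tk k) =
    Mt (tk k) * (2 ^ k / Mt (tk k)) + 2 * Mt (tk k) := by ring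
  rw [h3]; omega

lemma Jk_le (k : ℕ) (hk : 128 ≤ k) : Jk k * Mt (tk k) ≤ 3 * 2 ^ k := by
  unfold Jk
  have h1 := Nat.div_add_mod (2 ^ k) (Mt (tk k))
  have h2 := Mt_le k hk
  have h3 : (2 ^ k / Mt (tk k) + 2) * Mt (tk k) =
    Mt (tk k) * (2 ^ k / Mt (tk k)) + 2 * Mt (tk k) := by ring
  rw [h3]; omega

lemma w_le_R (t : ℕ) : 2 ^ t ≤ Rt t := Nat.lt_two_pow_self.le

lemma TrigP.mono {D : ℕ} {ε ε' : ℝ} {g : ℤ → ℝ} (h : TrigP D ε g) (hε : ε ≤ ε') : TrigP D ε' g := by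
  obtain ⟨c, hc, hg⟩ := h
  exact ⟨c, fun q => (hc q).trans hε, hg⟩

/-- dyadic pieces of the main term -/
noncomputable def gj : ℕ → ℤ → ℝ
  | 0 => mainS 1
  | (j+1) => fun n => mainS (2 ^ (j+1)) n - mainS (2 ^ j) n

lemma gj_sum (t : ℕ) (n : ℤ) : ∑ j ∈ Finset.range (t + 1), gj j n = mainS (2 ^ t) n := by
  induction t with
  | zero => simp [gj]
  | succ t ih => rw [Finset.sum_range_succ, ih]; simp [gj]

lemma gj_trig (j : ℕ) : TrigP (primorial (2 ^ j)) (2 * (1 / 2) ^ j) (gj j) := by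
  cases j with
  | zero =>
    exact (trigP_main 1).mono (by norm_num)
  | succ j =>
    refine (trigP_diff (2 ^ (j+1)) (2 ^ j) (Nat.pow_le_pow_right (by norm_num) (by omega))
      Nat.one_le_two_pow).mono ?_
    apply le_of_eq
    push_cast
    rw [pow_succ, one_div_pow]
    ring

lemma gj_per (j : ℕ) (n k : ℤ) : gj j (n + Mt j * k) = gj j n := by
  cases j with
  | zero =>
    exact mainS_periodic 1 (Mt 0) (Dvd.intro _ rfl) n k
  | succ j =>
    have h1 : primorial (2 ^ (j+1)) ∣ Mt (j+1) := Dvd.intro _ rfl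
    have h2 : primorial (2 ^ j) ∣ Mt (j+1) :=
      (primorial_dvd_primorial (Nat.pow_le_pow_right (by norm_num) (by omega))).trans h1
    simp only [gj]
    rw [mainS_periodic _ _ h1, mainS_periodic _ _ h2]

/-- error part -/
noncomputable def hk (k : ℕ) (n : ℤ) : ℝ := nuS (2 ^ tk k) (Rt (tk k)) n - mainS (2 ^ tk k) n

lemma opA_hk (k : ℕ) (h128 : 128 ≤ k) (F : ℤ → ℝ) :
    sqn (opA (Jk k * Mt (tk k)) (Mt (tk k)) (hk k) F) ≤
      ENNReal.ofReal (4 * (192 / k) ^ 2) * sqn F := by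
  obtain ⟨h1, h2, h3⟩ := tk_spec k h128
  have hw : 3 ≤ 2 ^ tk k := by
    calc 3 ≤ 2 ^ 2 := by norm_num
      _ ≤ _ := Nat.pow_le_pow_right (by norm_num) h1
  have htr := trigP_h (2 ^ tk k) (Rt (tk k)) hw (w_le_R _)
  have hD1 : 1 ≤ primorial (2 ^ tk k) * Rt (tk k) ^ 2 :=
    Nat.mul_pos (primorial_pos _) (by unfold Rt; positivity)
  have hM := D4_le (tk k)
  have hN : (primorial (2 ^ tk k) * Rt (tk k) ^ 2) ^ 4 ≤ Jk k * Mt (tk k) := by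
    exact hM.trans (le_trans (Nat.le_add_left _ _) (Jk_ge k))
  refine (opA_trigP hD1 htr _ _ hN hM F).trans ?_
  have h3' : (k:ℝ) ≤ 64 * 2 ^ tk k := by exact_mod_cast h3.le
  have hk0 : (0:ℝ) < k := by exact_mod_cast (by omega : 0 < k)
  have h4 : (3:ℝ) / ((2 ^ tk k : ℕ) : ℝ) ≤ 192 / k := by
    push_cast
    rw [div_le_div_iff₀ (by positivity) hk0]
    linarith
  have h5 : (0:ℝ) ≤ 3 / ((2 ^ tk k : ℕ) : ℝ) := by positivity
  refine mul_le_mul_left (ENNReal.ofReal_le_ofReal ?_) _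
  exact mul_le_mul_of_nonneg_left (pow_le_pow_left₀ h5 h4 2) (by norm_num)

/-- pieces after blocking -/
noncomputable def uj (κ : ℤ → ℕ) (F : ℤ → ℝ) (j : ℕ) (x : ℤ) : ℝ :=
  boxAvg (if j ≤ tk (κ x) then Jk (κ x) * Mt (tk (κ x)) / Mt j else 1) (Mt j)
    (fun y => |opA (Mt j) (Mt j) (gj j) F y|) x

lemma uj_sqn (κ : ℤ → ℕ) (F : ℤ → ℝ) (j : ℕ) :
    sqn (uj κ F j) ≤ ENNReal.ofReal ((1 / 4) ^ j) * (ENNReal.ofReal (128 ^ 2 * 16) * sqn F) := by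
  have hpos : ∀ x, 1 ≤ (if j ≤ tk (κ x) then Jk (κ x) * Mt (tk (κ x)) / Mt j else 1) := by
    intro x
    split_ifs with h
    · rw [Nat.one_le_div_iff (Mt_pos j)]
      have h1 := Nat.le_of_dvd (Mt_pos _) (Mt_dvd j _ h)
      exact h1.trans (le_trans (Nat.le_add_left _ _) (Jk_ge (κ x)))
    · exact le_rfl
  refine (boxAvg_sqn (Mt j) (Mt_pos j) _ hpos _ (fun _ => abs_nonneg _)).trans ?_
  rw [sqn_abs]
  have h2 := opA_trigP (primorial_pos _) (gj_trig j) (Mt j) (Mt j) (W4_le j) (W4_le j) F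
  refine (mul_le_mul_right h2 _).trans (le_of_eq ?_)
  rw [← mul_assoc, ← mul_assoc, ← ENNReal.ofReal_mul (by positivity),
    ← ENNReal.ofReal_mul (by positivity)]
  congr 2
  rw [mul_pow, ← pow_mul, mul_comm j 2, pow_mul]
  norm_num
  ring

lemma opA_main_le (κ : ℤ → ℕ) (F : ℤ → ℝ) (x : ℤ) :
    |opA (Jk (κ x) * Mt (tk (κ x))) (Mt (tk (κ x))) (mainS (2 ^ tk (κ x))) F x| ≤
      ∑ j ∈ Finset.range (tk (κ x) + 1), uj κ F j x := by
  have h1 : mainS (2 ^ tk (κ x)) = fun n => ∑ j ∈ Finset.range (tk (κ x) + 1), gj j n := by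
    funext n; rw [gj_sum]
  rw [h1, opA_sum]
  refine (Finset.abs_sum_le_sum_abs _ _).trans (Finset.sum_le_sum ?_)
  intro j hj
  have hj' : j ≤ tk (κ x) := by rw [Finset.mem_range] at hj; omega
  unfold uj
  rw [if_pos hj']
  obtain ⟨I', hI'⟩ := Mt_dvd j _ hj'
  have hI'1 : 1 ≤ I' := by
    by_contra h
    have : I' = 0 := by omega
    rw [this] at hI'
    have := Mt_pos (tk (κ x)); omega
  have hJ : 1 ≤ Jk (κ x) := Nat.succ_le_of_lt (Nat.succ_pos _)
  have e1 : Jk (κ x) * Mt (tk (κ x)) / Mt j = Jk (κ x) * I' := by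
    rw [hI']
    apply Nat.div_eq_of_eq_mul_left (Mt_pos j); ring
  rw [e1]
  have e2 : Jk (κ x) * Mt (tk (κ x)) = Jk (κ x) * I' * Mt j := by rw [hI']; ring
  have e3 : Mt (tk (κ x)) = I' * Mt j := by rw [hI']; ring
  rw [e2]
  conv_lhs => rw [e3]
  exact opA_block (Mt j) (Jk (κ x) * I') I' (Mt_pos j) hI'1 (Nat.le_mul_of_pos_left _ hJ) _ _
    (gj_per j) x


/-- the averaging operator on nonnegative functions -/
noncomputable def avgK (F : ℤ → ℝ) (k : ℕ) (x : ℤ) : ℝ :=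
  ∑ p ∈ primesUpTo (2 ^ k), (Real.log p / theta (2 ^ k)) * F (x + p)

/-- the contribution of small primes -/
noncomputable def smallK (F : ℤ → ℝ) (k : ℕ) (x : ℤ) : ℝ :=
  ∑ p ∈ primesUpTo (Rt (tk k)), (Real.log p / theta (2 ^ k)) * F (x + p)

lemma theta_nonneg (N : ℕ) : 0 ≤ theta N :=
  Finset.sum_nonneg fun p _ => Real.log_natCast_nonneg p

lemma avgK_nonneg (F : ℤ → ℝ) (hF : ∀ x, 0 ≤ F x) (k : ℕ) (x : ℤ) : 0 ≤ avgK F k x :=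
  Finset.sum_nonneg fun p _ => mul_nonneg
    (div_nonneg (Real.log_natCast_nonneg p) (theta_nonneg _)) (hF _)

lemma avgK_sqn (F : ℤ → ℝ) (k : ℕ) : sqn (avgK F k) ≤ sqn F := by
  have h := sqn_avg (primesUpTo (2 ^ k)) (fun p => Real.log p / theta (2 ^ k))
    (fun p _ => div_nonneg (Real.log_natCast_nonneg p) (theta_nonneg _)) 1
    (by rw [← Finset.sum_div]; exact div_self_le_one _) F
  rw [one_pow, ENNReal.ofReal_one, one_mul] at h
  exact h

lemma smallK_sqn (F : ℤ → ℝ) (k : ℕ) (h128 : 128 ≤ k) :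
    sqn (smallK F k) ≤ ENNReal.ofReal ((512 / k) ^ 2) * sqn F := by
  apply sqn_avg (primesUpTo (Rt (tk k))) (fun p => Real.log p / theta (2 ^ k))
    (fun p _ => div_nonneg (Real.log_natCast_nonneg p) (theta_nonneg _))
  rw [← Finset.sum_div]
  change theta (Rt (tk k)) / _ ≤ _
  have h1 := theta_le (Rt (tk k))
  have h2 := theta_ge_quarter k h128
  obtain ⟨_, h3, h4⟩ := tk_spec k h128
  have hN : (0:ℝ) < ((2 ^ k : ℕ) : ℝ) := by positivity
  have hk0 : (0:ℝ) < k := by exact_mod_cast (by omega : 0 < k)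
  have h5 : Rt (tk k) * k ≤ 64 * 2 ^ k := by
    calc Rt (tk k) * k ≤ Rt (tk k) * (64 * Rt (tk k)) := by
          apply Nat.mul_le_mul_left
          have := w_le_R (tk k)
          omega
      _ = 64 * 2 ^ (2 * 2 ^ tk k) := by unfold Rt; rw [two_mul, pow_add]; ring
      _ ≤ _ := by
        apply Nat.mul_le_mul_left
        exact Nat.pow_le_pow_right (by norm_num) (by omega)
  have h5' : (Rt (tk k) : ℝ) * k ≤ 64 * ((2 ^ k : ℕ) : ℝ) := by exact_mod_cast h5
  rw [div_le_div_iff₀ (by linarith) hk0]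
  nlinarith

lemma avgK_dom (F : ℤ → ℝ) (hF : ∀ x, 0 ≤ F x) (k : ℕ) (h128 : 128 ≤ k) (x : ℤ) :
    avgK F k x ≤ 1536 * opA (Jk k * Mt (tk k)) (Mt (tk k)) (nuS (2 ^ tk k) (Rt (tk k))) F x
      + smallK F k x := by
  classical
  obtain ⟨h2, h3, h4⟩ := tk_spec k h128
  have hθ := theta_ge_quarter k h128
  have hN : (0:ℝ) < ((2 ^ k : ℕ) : ℝ) := by positivity
  have hθ0 : 0 < theta (2 ^ k) := by linarith
  have hRN : Rt (tk k) ≤ 2 ^ k := Nat.pow_le_pow_right (by norm_num) (by omega)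
  have hR1 : 1 ≤ Rt (tk k) := Nat.one_le_two_pow
  set S := primesUpTo (2 ^ k) \ primesUpTo (Rt (tk k)) with hS
  have hsplit : avgK F k x = ∑ p ∈ S, (Real.log p / theta (2 ^ k)) * F (x + p) + smallK F k x := by
    unfold avgK smallK
    rw [hS, Finset.sum_sdiff (primesUpTo_mono hRN)]
  rw [hsplit]
  gcongr
  have hSp : ∀ p ∈ S, p ≤ 2 ^ k ∧ p.Prime ∧ Rt (tk k) < p := by
    intro p hp
    rw [hS, Finset.mem_sdiff, mem_primesUpTo, mem_primesUpTo] at hp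
    refine ⟨hp.1.1, hp.1.2, ?_⟩
    by_contra h
    exact hp.2 ⟨by omega, hp.1.2⟩
  have hdom := opA_dom (2 ^ k) (Mt (tk k)) (Jk k * Mt (tk k)) (Mt_pos _) (Jk_ge k)
    (nuS (2 ^ tk k) (Rt (tk k))) F (nuS_nonneg _ _ hR1) hF S (fun p hp => (hSp p hp).1)
    (Real.log (Rt (tk k)) / 2)
    (fun p hp => nuS_ge _ _ p (w_le_R _) hR1 (hSp p hp).2.1 (hSp p hp).2.2) x
  set O := opA (Jk k * Mt (tk k)) (Mt (tk k)) (nuS (2 ^ tk k) (Rt (tk k))) F x with hO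
  have hO0 : 0 ≤ O := by
    rw [hO]; unfold opA
    apply mul_nonneg (by positivity)
    exact Finset.sum_nonneg fun i _ => Finset.sum_nonneg fun j _ =>
      mul_nonneg (nuS_nonneg _ _ hR1 _) (hF _)
  have hJ : ((Jk k * Mt (tk k) : ℕ) : ℝ) ≤ 3 * ((2 ^ k : ℕ) : ℝ) := by exact_mod_cast Jk_le k h128
  have hl2 : 0 < Real.log 2 := Real.log_pos (by norm_num)
  have hlogR : Real.log (Rt (tk k)) = 2 ^ tk k * Real.log 2 := by
    unfold Rt; push_cast; rw [Real.log_pow]; push_cast; rfl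
  have hlogN : ∀ p ∈ S, Real.log p ≤ 64 * Real.log (Rt (tk k)) := by
    intro p hp
    have hp' := hSp p hp
    have hp0 : (0:ℝ) < p := by exact_mod_cast hp'.2.1.pos
    calc Real.log p ≤ Real.log ((2:ℝ) ^ k) := by
          apply Real.log_le_log hp0; exact_mod_cast hp'.1
      _ = k * Real.log 2 := Real.log_pow _ _
      _ ≤ (64 * 2 ^ tk k) * Real.log 2 := by
          apply mul_le_mul_of_nonneg_right _ hl2.le
          exact_mod_cast h4.le
      _ = _ := by rw [hlogR]; ring
  set sF := ∑ p ∈ S, F (x + p) with hsF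
  have hsum : ∑ p ∈ S, (Real.log p / theta (2 ^ k)) * F (x + p) ≤
      (64 * Real.log (Rt (tk k)) / theta (2 ^ k)) * sF := by
    rw [hsF, Finset.mul_sum]
    apply Finset.sum_le_sum
    intro p hp
    apply mul_le_mul_of_nonneg_right _ (hF _)
    exact div_le_div_of_nonneg_right (hlogN p hp) hθ0.le
  refine hsum.trans ?_
  rw [div_mul_eq_mul_div, div_le_iff₀ hθ0]
  have h5 : ((Jk k * Mt (tk k) : ℕ) : ℝ) * O ≤ 3 * ((2 ^ k : ℕ) : ℝ) * O :=
    mul_le_mul_of_nonneg_right hJ hO0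
  have h6 : ((2 ^ k : ℕ) : ℝ) / 4 * O ≤ theta (2 ^ k) * O := mul_le_mul_of_nonneg_right hθ hO0
  nlinarith

lemma sq_four (a b c d : ℝ) : (a + b + c + d) ^ 2 ≤ 4 * (a ^ 2 + b ^ 2 + c ^ 2 + d ^ 2) := by
  nlinarith [sq_nonneg (a - b), sq_nonneg (a - c), sq_nonneg (a - d), sq_nonneg (b - c),
    sq_nonneg (b - d), sq_nonneg (c - d)]

lemma sqn_four (f a b c d : ℤ → ℝ) (h : ∀ x, |f x| ≤ |a x| + |b x| + |c x| + |d x|) :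
    sqn f ≤ 4 * (sqn a + sqn b + sqn c + sqn d) := by
  unfold sqn
  rw [← ENNReal.tsum_add, ← ENNReal.tsum_add, ← ENNReal.tsum_add, ← ENNReal.tsum_mul_left]
  apply ENNReal.tsum_le_tsum
  intro x
  have h1 : f x ^ 2 ≤ 4 * (a x ^ 2 + b x ^ 2 + c x ^ 2 + d x ^ 2) := by
    have h2 := pow_le_pow_left₀ (abs_nonneg _) (h x) 2
    have h3 := sq_four |a x| |b x| |c x| |d x|
    simp only [sq_abs] at h2 h3
    exact h2.trans h3
  refine (ENNReal.ofReal_le_ofReal h1).trans (le_of_eq ?_)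
  rw [ENNReal.ofReal_mul (by norm_num), ENNReal.ofReal_add (by positivity) (by positivity),
    ENNReal.ofReal_add (by positivity) (by positivity),
    ENNReal.ofReal_add (by positivity) (by positivity), ENNReal.ofReal_ofNat]

lemma sqn_const_mul (c : ℝ) (f : ℤ → ℝ) :
    sqn (fun x => c * f x) = ENNReal.ofReal (c ^ 2) * sqn f := by
  unfold sqn
  rw [← ENNReal.tsum_mul_left]
  congr 1; funext x
  rw [mul_pow, ENNReal.ofReal_mul (by positivity)]

lemma tsum_ofReal_sq_ne_top (c a : ℝ) (hc : 0 ≤ c) :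
    ∑' k : ℕ, ENNReal.ofReal (c * (a / k) ^ 2) ≠ ⊤ := by
  have hs : Summable (fun k : ℕ => c * (a / (k:ℝ)) ^ 2) := by
    have := (Real.summable_one_div_nat_pow (p := 2)).2 (by norm_num)
    have := (this.mul_left (c * a ^ 2))
    refine this.congr fun k => ?_
    rw [div_pow]; ring
  rw [← ENNReal.ofReal_tsum_of_nonneg (fun _ => by positivity) hs]
  exact ENNReal.ofReal_ne_top

lemma exists_maxconst : ∃ C : ENNReal, C ≠ ⊤ ∧ ∀ (F : ℤ → ℝ), (∀ x, 0 ≤ F x) → ∀ κ : ℤ → ℕ,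
    sqn (fun x => avgK F (κ x) x) ≤ C * sqn F := by
  refine ⟨4 * (128 + ENNReal.ofReal (1536 ^ 2) * (4 * ENNReal.ofReal (128 ^ 2 * 16)) +
    ENNReal.ofReal (1536 ^ 2) * (∑' k : ℕ, ENNReal.ofReal (4 * (192 / k) ^ 2)) +
    ∑' k : ℕ, ENNReal.ofReal (1 * (512 / k) ^ 2)), ?_, ?_⟩
  · have h1 := tsum_ofReal_sq_ne_top 4 192 (by norm_num)
    have h2 := tsum_ofReal_sq_ne_top 1 512 (by norm_num)
    apply ENNReal.mul_ne_top (by norm_num)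
    refine ENNReal.add_ne_top.2 ⟨ENNReal.add_ne_top.2 ⟨ENNReal.add_ne_top.2 ⟨by norm_num, ?_⟩, ?_⟩, h2⟩
    · exact ENNReal.mul_ne_top ENNReal.ofReal_ne_top
        (ENNReal.mul_ne_top (by norm_num) ENNReal.ofReal_ne_top)
    · exact ENNReal.mul_ne_top ENNReal.ofReal_ne_top h1
  · intro F hF κ
    set A : ℕ → ℤ → ℝ := fun k x => if k < 128 then avgK F k x else 0 with hA
    set B : ℕ → ℤ → ℝ := fun k x => if 128 ≤ k then
      opA (Jk k * Mt (tk k)) (Mt (tk k)) (hk k) F x else 0 with hB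
    set V : ℕ → ℤ → ℝ := fun k x => if 128 ≤ k then smallK F k x else 0 with hV
    set T : ℤ → ℝ := fun x => ∑ j ∈ Finset.range (tk (κ x) + 1), uj κ F j x with hT
    have hmain := sqn_four (fun x => avgK F (κ x) x) (fun x => A (κ x) x) (fun x => 1536 * T x)
      (fun x => 1536 * B (κ x) x) (fun x => V (κ x) x) (by
        intro x
        by_cases hx : κ x < 128
        · simp only [hA]
          rw [if_pos hx]
          linarith [abs_nonneg (1536 * T x), abs_nonneg (1536 * B (κ x) x), abs_nonneg (V (κ x) x)]
        · have hx' : 128 ≤ κ x := by omega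
          have h1 := avgK_dom F hF (κ x) hx' x
          have h2 : opA (Jk (κ x) * Mt (tk (κ x))) (Mt (tk (κ x)))
              (nuS (2 ^ tk (κ x)) (Rt (tk (κ x)))) F x =
              opA (Jk (κ x) * Mt (tk (κ x))) (Mt (tk (κ x))) (mainS (2 ^ tk (κ x))) F x + B (κ x) x := by
            simp only [hB]
            rw [if_pos hx', ← opA_add]
            congr 1
            funext n
            unfold hk
            ring
          have h3 : opA (Jk (κ x) * Mt (tk (κ x))) (Mt (tk (κ x))) (mainS (2 ^ tk (κ x))) F x ≤ T x :=
            (le_abs_self _).trans (opA_main_le κ F x)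
          have h4 : smallK F (κ x) x = V (κ x) x := by simp only [hV]; rw [if_pos hx']
          rw [abs_of_nonneg (avgK_nonneg F hF _ _), abs_mul, abs_mul,
            abs_of_pos (by norm_num : (0:ℝ) < 1536)]
          rw [h2, h4] at h1
          linarith [le_abs_self (T x), le_abs_self (B (κ x) x), le_abs_self (V (κ x) x),
            abs_nonneg (A (κ x) x)])
    refine hmain.trans ?_
    rw [mul_assoc, add_mul, add_mul, add_mul, sqn_const_mul, sqn_const_mul]
    refine mul_le_mul_right ?_ _
    refine add_le_add (add_le_add (add_le_add ?_ ?_) ?_) ?_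
    · refine (sqn_choice A κ).trans ?_
      rw [tsum_eq_sum (s := Finset.range 128)]
      · refine (Finset.sum_le_sum (g := fun _ => sqn F) ?_).trans ?_
        · intro k hk'
          rw [Finset.mem_range] at hk'
          have : A k = avgK F k := by funext x; simp only [hA]; rw [if_pos hk']
          rw [this]; exact avgK_sqn F k
        · rw [Finset.sum_const, Finset.card_range, nsmul_eq_mul]; norm_num
      · intro k hk'
        rw [Finset.mem_range] at hk'
        simp [sqn, hA, hk']
    · rw [mul_assoc]
      refine mul_le_mul_right ?_ _
      rw [mul_assoc]
      exact sqn_dyadic (fun x => tk (κ x) + 1) (uj κ F) _ (uj_sqn κ F)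
    · rw [mul_assoc]
      refine mul_le_mul_right ?_ _
      refine (sqn_choice B κ).trans ?_
      rw [← ENNReal.tsum_mul_right]
      apply ENNReal.tsum_le_tsum
      intro k
      by_cases hk' : 128 ≤ k
      · have : B k = opA (Jk k * Mt (tk k)) (Mt (tk k)) (hk k) F := by
          funext x; simp only [hB]; rw [if_pos hk']
        rw [this]; exact opA_hk k hk' F
      · have : sqn (B k) = 0 := by simp [sqn, hB, hk']
        rw [this]; exact zero_le
    · refine (sqn_choice V κ).trans ?_
      rw [← ENNReal.tsum_mul_right]
      apply ENNReal.tsum_le_tsum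
      intro k
      by_cases hk' : 128 ≤ k
      · have : V k = smallK F k := by
          funext x; simp only [hV]; rw [if_pos hk']
        rw [this, one_mul]; exact smallK_sqn F k hk'
      · have : sqn (V k) = 0 := by simp [sqn, hV, hk']
        rw [this]; exact zero_le

lemma norm_avg_le (f : ℤ → ℂ) (k : ℕ) (x : ℤ) :
    ‖weightedPrimeAvg f (2 ^ k) x‖ ≤ avgK (fun y => ‖f y‖) k x := by
  unfold weightedPrimeAvg avgK
  rw [norm_mul, norm_inv, Complex.norm_real, Real.norm_of_nonneg (theta_nonneg _)]
  refine (mul_le_mul_of_nonneg_left (norm_sum_le _ _) (inv_nonneg.2 (theta_nonneg _))).trans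
    (le_of_eq ?_)
  rw [Finset.mul_sum]
  apply Finset.sum_congr rfl
  intro p _
  rw [norm_mul, Complex.norm_real, Real.norm_of_nonneg (Real.log_natCast_nonneg p)]
  ring

lemma exists_choice (f : ℤ → ℂ) (x : ℤ) : ∃ k : ℕ,
    (⨆ (n : ℕ) (_ : 1 ≤ n), ‖weightedPrimeAvg f (2 ^ n) x‖) ≤ 2 * avgK (fun y => ‖f y‖) k x := by
  set S := ⨆ (n : ℕ) (_ : 1 ≤ n), ‖weightedPrimeAvg f (2 ^ n) x‖ with hS
  by_cases h0 : S ≤ 0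
  · refine ⟨0, h0.trans ?_⟩
    exact mul_nonneg (by norm_num) (avgK_nonneg _ (fun y => norm_nonneg _) _ _)
  · have h1 : S / 2 < S := by linarith
    obtain ⟨k, hk'⟩ := exists_lt_of_lt_ciSup (hS ▸ h1)
    refine ⟨k, ?_⟩
    have h2 : (⨆ (_ : 1 ≤ k), ‖weightedPrimeAvg f (2 ^ k) x‖) ≤ ‖weightedPrimeAvg f (2 ^ k) x‖ :=
      Real.iSup_le (fun _ => le_rfl) (norm_nonneg _)
    have h3 := norm_avg_le f k x
    linarith

theorem stmt_16 :
    ∃ C : ℝ, 0 < C ∧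
      ∀ (f : ℤ → ℂ), Summable (fun x : ℤ => ‖f x‖ ^ 2) →
        Real.sqrt (∑' x : ℤ,
            (⨆ (n : ℕ) (_ : 1 ≤ n), ‖weightedPrimeAvg f (2 ^ n) x‖) ^ 2) ≤
          C * Real.sqrt (∑' x : ℤ, ‖f x‖ ^ 2) := by
  obtain ⟨C, hC, hmain⟩ := exists_maxconst
  refine ⟨Real.sqrt (4 * C.toReal) + 1, by positivity, ?_⟩
  intro f hf
  set S : ℤ → ℝ := fun x => ⨆ (n : ℕ) (_ : 1 ≤ n), ‖weightedPrimeAvg f (2 ^ n) x‖ with hS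
  change Real.sqrt (∑' x : ℤ, S x ^ 2) ≤ _
  by_cases hs : Summable (fun x => S x ^ 2)
  · choose κ hκ using exists_choice f
    have hS0 : ∀ x, 0 ≤ S x := fun x => Real.iSup_nonneg fun n => Real.iSup_nonneg fun _ =>
      norm_nonneg _
    have h1 : sqn S ≤ 4 * C * sqn (fun y => ‖f y‖) := by
      calc sqn S ≤ sqn (fun x => 2 * avgK (fun y => ‖f y‖) (κ x) x) := by
            apply sqn_mono
            intro x
            rw [abs_of_nonneg (hS0 x)]
            exact (hκ x).trans (le_abs_self _)
        _ = 4 * sqn (fun x => avgK (fun y => ‖f y‖) (κ x) x) := by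
            rw [sqn_const_mul]; norm_num
        _ ≤ 4 * (C * sqn (fun y => ‖f y‖)) :=
            mul_le_mul_right (hmain _ (fun y => norm_nonneg _) κ) _
        _ = _ := by rw [mul_assoc]
    unfold sqn at h1
    rw [← ENNReal.ofReal_tsum_of_nonneg (fun _ => sq_nonneg _) hs,
      ← ENNReal.ofReal_tsum_of_nonneg (fun _ => sq_nonneg _) hf] at h1
    have hF0 : 0 ≤ ∑' x : ℤ, ‖f x‖ ^ 2 := tsum_nonneg fun _ => sq_nonneg _
    have h2 : ∑' x : ℤ, S x ^ 2 ≤ (4 * C.toReal) * ∑' x : ℤ, ‖f x‖ ^ 2 := by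
      have h3 := ENNReal.toReal_mono (ENNReal.mul_ne_top (ENNReal.mul_ne_top (by norm_num) hC)
        ENNReal.ofReal_ne_top) h1
      rw [ENNReal.toReal_ofReal (tsum_nonneg fun _ => sq_nonneg _), ENNReal.toReal_mul,
        ENNReal.toReal_mul, ENNReal.toReal_ofReal hF0] at h3
      simpa using h3
    refine (Real.sqrt_le_sqrt h2).trans ?_
    rw [Real.sqrt_mul (by positivity)]
    apply mul_le_mul_of_nonneg_right (by linarith) (Real.sqrt_nonneg _)
  · rw [tsum_eq_zero_of_not_summable hs, Real.sqrt_zero]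
    positivity
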